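/- arXiv:2112.09430 — 4 statements merged into one kernel-verified Lean document; each statement's English description precedes it below -/
import Mathlib

section
/- Let V be a finite-dimensional real vector space with a symmetric bilinear form ⟨·,·⟩ of signature (p,q,0) (i.e. nondegenerate), and let {w₁, …, w_k} with k ≥ 1 be a (0,0,k)-system, i.e. k linearly independent vectors satisfying ⟨w_i, w_j⟩ = 0 for all i, j. Then there exists a (p,q,0)-basis {x₁, …, x_p, y₁, …, y_q} of V (i.e. a basis with ⟨x_i,x_j⟩ = δ_{ij}, ⟨y_i,y_j⟩ = −δ_{ij}, ⟨x_i,y_j⟩ = 0) such that w_i = x_i + y_i for all i ∈ {1, …, k}. -/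
open Module

noncomputable section

/-- The radical of a subspace `W` with respect to a bilinear form `B`:
the set of vectors of `W` orthogonal to every vector of `W`. -/
def rad {V : Type*} [AddCommGroup V] [Module ℝ V] (B : LinearMap.BilinForm ℝ V)
    (W : Submodule ℝ V) : Submodule ℝ V :=
  W ⊓ LinearMap.BilinForm.orthogonal B W

/-- The maximal dimension of a subspace of `W` on which `B` is positive definite. -/
def posIdx {V : Type*} [AddCommGroup V] [Module ℝ V] (B : LinearMap.BilinForm ℝ V)
    (W : Submodule ℝ V) : ℕ :=
  sSup {k | ∃ P : Submodule ℝ V, P ≤ W ∧ finrank ℝ P = k ∧ ∀ x ∈ P, x ≠ 0 → 0 < B x x}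

/-- The maximal dimension of a subspace of `W` on which `B` is negative definite. -/
def negIdx {V : Type*} [AddCommGroup V] [Module ℝ V] (B : LinearMap.BilinForm ℝ V)
    (W : Submodule ℝ V) : ℕ :=
  sSup {k | ∃ P : Submodule ℝ V, P ≤ W ∧ finrank ℝ P = k ∧ ∀ x ∈ P, x ≠ 0 → B x x < 0}

/-- The signature `(s, t, u)` of a subspace `W` with respect to a bilinear form `B`. -/
def signat {V : Type*} [AddCommGroup V] [Module ℝ V] (B : LinearMap.BilinForm ℝ V)
    (W : Submodule ℝ V) : ℕ × ℕ × ℕ :=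
  (posIdx B W, negIdx B W, finrank ℝ (rad B W))

/-- The standard inner product of signature `(p, q)` on `ℝ^(p+q)`,
given by the diagonal matrix `I_{p,q}`. -/
def stdForm (p q : ℕ) : LinearMap.BilinForm ℝ (Fin (p + q) → ℝ) :=
  Matrix.toLinearMap₂' ℝ (Matrix.diagonal fun i => if (i : ℕ) < p then (1 : ℝ) else -1)

section helpers

variable {V : Type*} [AddCommGroup V] [Module ℝ V]

theorem aux_sum {ι : Type*} [Fintype ι] [DecidableEq ι] (B : LinearMap.BilinForm ℝ V)
    (e : ι → V) (ε : ι → ℝ)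
    (he : ∀ i j, B (e i) (e j) = if i = j then ε i else 0) (c : ι → ℝ) (j : ι) :
    B (e j) (∑ i, c i • e i) = c j * ε j := by
  simp [map_sum, he]

theorem aux_li {ι : Type*} [Fintype ι] [DecidableEq ι] (B : LinearMap.BilinForm ℝ V)
    (e : ι → V) (ε : ι → ℝ) (hε : ∀ i, ε i * ε i = 1)
    (he : ∀ i j, B (e i) (e j) = if i = j then ε i else 0) : LinearIndependent ℝ e := by
  rw [Fintype.linearIndependent_iff]
  intro c hc j
  have h := aux_sum B e ε he c j
  rw [hc, map_zero] at h
  have h2 := hε j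
  calc c j = c j * ε j * ε j := by rw [mul_assoc, h2, mul_one]
    _ = 0 := by rw [← h, zero_mul]

theorem aux_exists {ι : Type*} [Fintype ι] [DecidableEq ι] [FiniteDimensional ℝ V]
    (B : LinearMap.BilinForm ℝ V)
    (hB : ∀ x y, B x y = B y x) (hnd : ∀ v, (∀ u, B v u = 0) → v = 0)
    (e : ι → V) (ε : ι → ℝ) (hε : ∀ i, ε i * ε i = 1)
    (he : ∀ i j, B (e i) (e j) = if i = j then ε i else 0)
    (hcard : Fintype.card ι < finrank ℝ V) :
    ∃ v, (∀ i, B (e i) v = 0) ∧ (B v v = 1 ∨ B v v = -1) := by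
  -- the projection on the orthogonal complement
  have hT : ∀ v : V, ∃ c : ι → ℝ, ∀ j, B (e j) (v - ∑ i, c i • e i) = 0 := by
    intro v
    refine ⟨fun i => ε i * B (e i) v, fun j => ?_⟩
    rw [map_sub, aux_sum B e ε he]
    linear_combination -(B (e j) v) * hε j
  have hne : ∃ v0 : V, v0 ∉ Submodule.span ℝ (Set.range e) := by
    by_contra! h
    have h1 : Submodule.span ℝ (Set.range e) = ⊤ := by
      rw [eq_top_iff]; intro v _; exact h v
    have h2 := finrank_range_le_card (R := ℝ) e
    rw [Set.finrank, h1, finrank_top] at h2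
    omega
  obtain ⟨v0, hv0⟩ := hne
  obtain ⟨c0, hc0⟩ := hT v0
  have hmem : ∀ c : ι → ℝ, ∑ i, c i • e i ∈ Submodule.span ℝ (Set.range e) := fun c =>
    Submodule.sum_mem _ fun i _ => Submodule.smul_mem _ _ (Submodule.subset_span ⟨i, rfl⟩)
  set v1 := v0 - ∑ i, c0 i • e i with hv1
  have hv1ne : v1 ≠ 0 := by
    intro h
    rw [hv1, sub_eq_zero] at h
    exact hv0 (h ▸ hmem c0)
  have hex : ∃ v, (∀ i, B (e i) v = 0) ∧ B v v ≠ 0 := by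
    by_contra! h
    apply hv1ne
    apply hnd
    intro u
    obtain ⟨c, hc⟩ := hT u
    set u1 := u - ∑ i, c i • e i with hu1
    have h1 := h v1 hc0
    have h2 := h u1 hc
    have h3 := h (v1 + u1) (fun i => by rw [map_add, hc0, hc, add_zero])
    have h4 : B v1 u1 = 0 := by
      simp only [map_add, LinearMap.add_apply] at h3
      rw [hB u1 v1] at h3
      linarith
    have h5 : B v1 (∑ i, c i • e i) = 0 := by
      rw [map_sum]
      refine Finset.sum_eq_zero fun i _ => ?_
      rw [map_smul, hB, hc0, smul_zero]
    have h6 : u = u1 + ∑ i, c i • e i := by rw [hu1]; abel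
    rw [h6, map_add, h4, h5, add_zero]
  obtain ⟨v, hv, hvv⟩ := hex
  have hpos : 0 < |B v v| := abs_pos.mpr hvv
  have hs : Real.sqrt |B v v| * Real.sqrt |B v v| = |B v v| := Real.mul_self_sqrt hpos.le
  have hs0 : Real.sqrt |B v v| ≠ 0 := (Real.sqrt_pos.mpr hpos).ne'
  refine ⟨(Real.sqrt |B v v|)⁻¹ • v, fun i => by rw [map_smul, hv, smul_zero], ?_⟩
  have : B ((Real.sqrt |B v v|)⁻¹ • v) ((Real.sqrt |B v v|)⁻¹ • v) = B v v / |B v v| := by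
    rw [map_smul, map_smul, LinearMap.smul_apply, smul_eq_mul, smul_eq_mul]
    rw [← mul_assoc, ← mul_inv, hs, div_eq_mul_inv, mul_comm]
  rw [this]
  rcases lt_or_gt_of_ne hvv with h | h
  · right; rw [abs_of_neg h]; field_simp
  · left; rw [abs_of_pos h]; field_simp

theorem aux_def {ι : Type*} [Fintype ι] [DecidableEq ι] (B : LinearMap.BilinForm ℝ V)
    (e : ι → V) (s : ℝ)
    (he : ∀ i j, B (e i) (e j) = if i = j then s else 0) (v : V)
    (hv : v ∈ Submodule.span ℝ (Set.range e)) (hv0 : v ≠ 0) : ∃ t : ℝ, 0 < t ∧ B v v = t * s := by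
  obtain ⟨c, rfl⟩ := (Submodule.mem_span_range_iff_exists_fun ℝ).1 hv
  refine ⟨∑ i, c i * c i, ?_, ?_⟩
  · rcases (Finset.sum_nonneg fun i _ => mul_self_nonneg (c i) :
      0 ≤ ∑ i, c i * c i).lt_or_eq with h | h
    · exact h
    · exfalso
      apply hv0
      have := (Finset.sum_eq_zero_iff_of_nonneg fun i _ => mul_self_nonneg (c i)).1 h.symm
      refine Finset.sum_eq_zero fun i hi => ?_
      rw [mul_self_eq_zero.1 (this i hi), zero_smul]
  · rw [map_sum B, LinearMap.sum_apply, Finset.sum_mul]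
    refine Finset.sum_congr rfl fun j _ => ?_
    rw [map_smul, LinearMap.smul_apply, aux_sum B e (fun _ => s) he c j, smul_eq_mul]
    ring

/-- There is an orthonormal `(a,b,0)`-system extending `w`. -/
def AuxExt (B : LinearMap.BilinForm ℝ V) {k : ℕ} (w : Fin k → V) (a b : ℕ) : Prop :=
  ∃ (x : Fin a → V) (y : Fin b → V), (∀ i j, B (x i) (x j) = if i = j then 1 else 0) ∧
    (∀ i j, B (y i) (y j) = if i = j then -1 else 0) ∧ (∀ i j, B (x i) (y j) = 0) ∧
    ∃ (ha : k ≤ a) (hb : k ≤ b), ∀ i, w i = x (Fin.castLE ha i) + y (Fin.castLE hb i)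

theorem aux_snoc (B : LinearMap.BilinForm ℝ V) (hB : ∀ x y, B x y = B y x) {a : ℕ} (s : ℝ)
    (x : Fin a → V) (hx : ∀ i j, B (x i) (x j) = if i = j then s else 0) (v : V)
    (hv : ∀ i, B (x i) v = 0) (hvv : B v v = s) :
    ∀ i j, B (Fin.snoc (α := fun _ => V) x v i) (Fin.snoc (α := fun _ => V) x v j) =
      if i = j then s else 0 := by
  intro i j
  induction i using Fin.lastCases with
  | last =>
    induction j using Fin.lastCases with
    | last => simp [hvv]
    | cast j => simp [hB v, hv, (Fin.castSucc_lt_last j).ne']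
  | cast i =>
    induction j using Fin.lastCases with
    | last => simp [hv, (Fin.castSucc_lt_last i).ne]
    | cast j => simp [hx]

theorem aux_castLE {a k : ℕ} (x : Fin a → V) (v : V) (h : k ≤ a) (i : Fin k) :
    Fin.snoc (α := fun _ => V) x v (Fin.castLE (h.trans (Nat.le_succ a)) i) =
      x (Fin.castLE h i) := by
  have : Fin.castLE (h.trans (Nat.le_succ a)) i = Fin.castSucc (Fin.castLE h i) := rfl
  rw [this, Fin.snoc_castSucc]

theorem aux_sumorth (B : LinearMap.BilinForm ℝ V) (hB : ∀ x y, B x y = B y x) {a b : ℕ}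
    (x : Fin a → V) (y : Fin b → V)
    (hx : ∀ i j, B (x i) (x j) = if i = j then 1 else 0)
    (hy : ∀ i j, B (y i) (y j) = if i = j then -1 else 0) (hxy : ∀ i j, B (x i) (y j) = 0) :
    ∀ i j, B (Sum.elim x y i) (Sum.elim x y j) =
        if i = j then Sum.elim (fun _ => (1 : ℝ)) (fun _ => (-1 : ℝ)) i else 0 := by
  rintro (i | i) (j | j)
  · simp [hx]
  · simp [hxy]
  · simp [hB (y i), hxy]
  · simp [hy]

theorem aux_eps {a b : ℕ} (i : Fin a ⊕ Fin b) :
    Sum.elim (fun _ => (1 : ℝ)) (fun _ => (-1 : ℝ)) i *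
      Sum.elim (fun _ => (1 : ℝ)) (fun _ => (-1 : ℝ)) i = 1 := by
  rcases i with i | i <;> simp

theorem aux_step [FiniteDimensional ℝ V] (B : LinearMap.BilinForm ℝ V)
    (hB : ∀ x y, B x y = B y x) (hnd : ∀ v, (∀ u, B v u = 0) → v = 0)
    {k : ℕ} (w : Fin k → V) (a b : ℕ) (h : AuxExt B w a b) (hab : a + b < finrank ℝ V) :
    AuxExt B w (a + 1) b ∨ AuxExt B w a (b + 1) := by
  obtain ⟨x, y, hx, hy, hxy, ha, hb, hw⟩ := h
  obtain ⟨v, hv, hvv⟩ := aux_exists B hB hnd (Sum.elim x y) _ aux_eps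
    (aux_sumorth B hB x y hx hy hxy) (by simpa using hab)
  have hvx : ∀ i, B (x i) v = 0 := fun i => hv (Sum.inl i)
  have hvy : ∀ i, B (y i) v = 0 := fun i => hv (Sum.inr i)
  rcases hvv with hvv | hvv
  · left
    refine ⟨Fin.snoc x v, y, aux_snoc B hB 1 x hx v hvx hvv, hy, ?_,
      ha.trans (Nat.le_succ a), hb, fun i => ?_⟩
    · intro i j
      induction i using Fin.lastCases with
      | last => simp [hB v, hvy]
      | cast i => simp [hxy]
    · rw [aux_castLE, hw]
  · right
    refine ⟨x, Fin.snoc y v, hx, aux_snoc B hB (-1) y hy v hvy hvv, ?_,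
      ha, hb.trans (Nat.le_succ b), fun i => ?_⟩
    · intro i j
      induction j using Fin.lastCases with
      | last => simp [hvx]
      | cast j => simp [hxy]
    · rw [aux_castLE, hw]

theorem aux_full [FiniteDimensional ℝ V] (B : LinearMap.BilinForm ℝ V)
    (hB : ∀ x y, B x y = B y x) (hnd : ∀ v, (∀ u, B v u = 0) → v = 0)
    {k : ℕ} (w : Fin k → V) (n : ℕ) : ∀ (a b : ℕ), AuxExt B w a b → finrank ℝ V ≤ a + b + n →
    ∃ a b, AuxExt B w a b ∧ finrank ℝ V ≤ a + b := by
  induction n with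
  | zero => intro a b h hn; exact ⟨a, b, h, hn⟩
  | succ n ih =>
    intro a b h hn
    by_cases hab : a + b < finrank ℝ V
    · rcases aux_step B hB hnd w a b h hab with h' | h'
      · exact ih _ _ h' (by omega)
      · exact ih _ _ h' (by omega)
    · exact ⟨a, b, h, not_lt.1 hab⟩

theorem aux_start [FiniteDimensional ℝ V] (B : LinearMap.BilinForm ℝ V)
    (hB : ∀ x y, B x y = B y x) (hnd : ∀ v, (∀ u, B v u = 0) → v = 0)
    {k : ℕ} (w : Fin k → V) (hw : LinearIndependent ℝ w)
    (hnull : ∀ i j, B (w i) (w j) = 0) : AuxExt B w k k := by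
  have hker : LinearMap.ker B = ⊥ := by
    rw [LinearMap.ker_eq_bot']
    intro v hv
    exact hnd v fun u => by rw [hv]; rfl
  have hBs : Function.Surjective B :=
    (LinearMap.injective_iff_surjective_of_finrank_eq_finrank
      (Subspace.dual_finrank_eq (K := ℝ) (V := V)).symm).1 (LinearMap.ker_eq_bot.1 hker)
  have hu : ∃ u : Fin k → V, ∀ i j, B (w i) (u j) = if i = j then 1 else 0 := by
    have hinj : Function.Injective (Fintype.linearCombination ℝ w) :=
      hw.fintypeLinearCombination_injective
    choose φ hφ using fun j : Fin k =>
      LinearMap.dualMap_surjective_of_injective hinj (LinearMap.proj j)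
    choose u hu using fun j => hBs (φ j)
    refine ⟨u, fun i j => ?_⟩
    have := LinearMap.congr_fun (hφ j) (Pi.single i 1)
    rw [hB, hu]
    simpa [Pi.single_apply, Fintype.linearCombination_apply, eq_comm] using this
  obtain ⟨u, hu⟩ := hu
  have hu' : ∀ i j, B (u i) (w j) = if i = j then 1 else 0 := fun i j => by
    rw [hB, hu]; simp [eq_comm]
  set z : Fin k → V := fun j => u j - (1 / 2 : ℝ) • ∑ l, B (u j) (u l) • w l with hz
  have hwz : ∀ i j, B (w i) (z j) = if i = j then 1 else 0 := by
    intro i j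
    simp [hz, hu, hnull, map_sum]
  have hzw : ∀ i j, B (z i) (w j) = if i = j then 1 else 0 := fun i j => by
    rw [hB, hwz]; simp [eq_comm]
  have hzz : ∀ i j, B (z i) (z j) = 0 := by
    intro i j
    have h1 : B (z i) (z j) = B (z i) (u j) - 1 / 2 * B (u j) (u i) := by
      conv_lhs => rw [show z j = u j - (1 / 2 : ℝ) • ∑ l, B (u j) (u l) • w l from rfl]
      rw [map_sub, map_smul, map_sum]
      simp [hzw]
    have h2 : B (z i) (u j) = B (u i) (u j) - 1 / 2 * B (u i) (u j) := by
      rw [hz]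
      simp [hu, map_sum, LinearMap.sum_apply]
    rw [h1, h2, hB (u j)]
    ring
  refine ⟨fun i => (1 / 2 : ℝ) • w i + z i, fun i => (1 / 2 : ℝ) • w i - z i, ?_, ?_, ?_,
    le_rfl, le_rfl, ?_⟩
  · intro i j
    simp only [map_add, map_smul, LinearMap.add_apply, LinearMap.smul_apply, hnull, hwz, hzw, hzz,
      smul_eq_mul]
    split_ifs <;> norm_num
  · intro i j
    simp only [map_sub, map_smul, LinearMap.sub_apply, LinearMap.smul_apply, hnull, hwz, hzw, hzz,
      smul_eq_mul]
    split_ifs <;> norm_num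
  · intro i j
    simp only [map_sub, map_add, map_smul, LinearMap.add_apply, LinearMap.smul_apply, hnull, hwz,
      hzw, hzz, smul_eq_mul]
    split_ifs <;> norm_num
  · intro i
    simp only [Fin.castLE_rfl, id]
    module

theorem aux_disj [FiniteDimensional ℝ V] (B : LinearMap.BilinForm ℝ V) (P Q : Submodule ℝ V)
    (hP : ∀ x ∈ P, x ≠ 0 → 0 < B x x) (hQ : ∀ x ∈ Q, x ≠ 0 → B x x < 0) :
    finrank ℝ P + finrank ℝ Q ≤ finrank ℝ V := by
  apply Submodule.finrank_add_finrank_le_of_disjoint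
  rw [Submodule.disjoint_def]
  intro x hx hx'
  by_contra h
  exact lt_asymm (hP x hx h) (hQ x hx' h)

end helpers

/-- If `B` is nondegenerate of signature `(p,q,0)` and `w₁, …, w_k` (`k ≥ 1`) are linearly
independent pairwise-orthogonal null vectors, then there is a `(p,q,0)`-basis
`{x₁, …, x_p, y₁, …, y_q}` of `V` with `wᵢ = xᵢ + yᵢ` for `i ∈ {1, …, k}`. -/
theorem extension_of_null_system {V : Type*} [AddCommGroup V] [Module ℝ V]
    [FiniteDimensional ℝ V] (B : LinearMap.BilinForm ℝ V) (hB : ∀ x y, B x y = B y x)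
    (p q k : ℕ) (hk : 1 ≤ k) (hsig : signat B ⊤ = (p, q, 0))
    (w : Fin k → V) (hw : LinearIndependent ℝ w)
    (hnull : ∀ i j, B (w i) (w j) = 0) :
    ∃ (hkp : k ≤ p) (hkq : k ≤ q) (b : Basis (Fin p ⊕ Fin q) ℝ V),
      (∀ i j, B (b i) (b j) =
        if i = j then Sum.elim (fun _ => (1 : ℝ)) (fun _ => (-1 : ℝ)) i else 0) ∧
      ∀ i : Fin k, w i = b (Sum.inl (Fin.castLE hkp i)) + b (Sum.inr (Fin.castLE hkq i)) := by
  simp only [signat, Prod.mk.injEq] at hsig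
  obtain ⟨hp, hq, hr⟩ := hsig
  have hnd : ∀ v, (∀ u, B v u = 0) → v = 0 := by
    intro v hv
    have h0 : rad B ⊤ = ⊥ := Submodule.finrank_eq_zero.1 hr
    rw [← Submodule.mem_bot ℝ, ← h0]
    refine ⟨trivial, ?_⟩
    rw [SetLike.mem_coe, LinearMap.BilinForm.mem_orthogonal_iff]
    intro u _
    change B u v = 0
    rw [hB, hv]
  obtain ⟨a, b, ⟨x, y, hx, hy, hxy, ha, hb, hwxy⟩, hab⟩ := aux_full B hB hnd w (finrank ℝ V) k k
    (aux_start B hB hnd w hw hnull) (by omega)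
  have horth := aux_sumorth B hB x y hx hy hxy
  have hli := aux_li B (Sum.elim x y) _ aux_eps horth
  have hcard : a + b = finrank ℝ V := by
    refine le_antisymm ?_ hab
    simpa using hli.fintype_card_le_finrank
  have hlix : LinearIndependent ℝ x := aux_li B x (fun _ => 1) (by simp) hx
  have hliy : LinearIndependent ℝ y := aux_li B y (fun _ => -1) (by simp) hy
  have hfx : finrank ℝ (Submodule.span ℝ (Set.range x)) = a := by
    simpa using finrank_span_eq_card hlix
  have hfy : finrank ℝ (Submodule.span ℝ (Set.range y)) = b := by
    simpa using finrank_span_eq_card hliy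
  have hposx : ∀ v ∈ Submodule.span ℝ (Set.range x), v ≠ 0 → 0 < B v v := by
    intro v hv hv0
    obtain ⟨t, ht, h⟩ := aux_def B x 1 hx v hv hv0
    rw [h]; linarith
  have hnegy : ∀ v ∈ Submodule.span ℝ (Set.range y), v ≠ 0 → B v v < 0 := by
    intro v hv hv0
    obtain ⟨t, ht, h⟩ := aux_def B y (-1) hy v hv hv0
    rw [h]; linarith
  have hbdp : BddAbove {k | ∃ P : Submodule ℝ V, P ≤ ⊤ ∧ finrank ℝ P = k ∧
      ∀ x ∈ P, x ≠ 0 → 0 < B x x} := by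
    refine ⟨finrank ℝ V, ?_⟩
    rintro _ ⟨P, _, rfl, _⟩
    exact Submodule.finrank_le P
  have hbdq : BddAbove {k | ∃ P : Submodule ℝ V, P ≤ ⊤ ∧ finrank ℝ P = k ∧
      ∀ x ∈ P, x ≠ 0 → B x x < 0} := by
    refine ⟨finrank ℝ V, ?_⟩
    rintro _ ⟨P, _, rfl, _⟩
    exact Submodule.finrank_le P
  have hap : a ≤ p := by
    rw [← hp]
    exact le_csSup hbdp ⟨_, le_top, hfx, hposx⟩
  have hbq : b ≤ q := by
    rw [← hq]
    exact le_csSup hbdq ⟨_, le_top, hfy, hnegy⟩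
  obtain ⟨P, _, hPp, hP⟩ := Nat.sSup_mem (by exact ⟨a, _, le_top, hfx, hposx⟩) hbdp
  obtain ⟨Q, _, hQq, hQ⟩ := Nat.sSup_mem (by exact ⟨b, _, le_top, hfy, hnegy⟩) hbdq
  have hPp' : finrank ℝ P = p := hPp.trans hp
  have hQq' : finrank ℝ Q = q := hQq.trans hq
  have h1 := aux_disj B P _ hP hnegy
  have h2 := aux_disj B _ Q hposx hQ
  obtain rfl : a = p := by omega
  obtain rfl : b = q := by omega
  have hc : Fintype.card (Fin a ⊕ Fin b) = finrank ℝ V := by simpa using hcard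
  have : Nonempty (Fin a ⊕ Fin b) := ⟨Sum.inl ⟨0, by omega⟩⟩
  refine ⟨ha, hb, basisOfLinearIndependentOfCardEqFinrank hli hc, ?_, ?_⟩
  · simpa only [coe_basisOfLinearIndependentOfCardEqFinrank] using horth
  · simpa only [coe_basisOfLinearIndependentOfCardEqFinrank, Sum.elim_inl, Sum.elim_inr] using hwxy
end
end

section
/- Let V be a finite-dimensional real vector space with a symmetric bilinear form ⟨·,·⟩ of signature (p,q,r), and let W be a subspace of V with sign(W) = (s,t,u) and dim(W ∩ rad(V)) = k. Fix an (s,t,u)-basis {x₁, …, x_s, y₁, …, y_t, z₁, …, z_u} of W such that z_{u−k+1}, …, z_u ∈ rad(V). Then V has a (p,q,r)-basis {α₁, …, α_p, β₁, …, β_q, γ₁, …, γ_r} such that x_i = α_i for i ∈ {1,…,s}, y_i = β_i for i ∈ {1,…,t}, z_i = α_{s+i} + β_{t+i} for i ∈ {1,…,u−k}, and z_{u−k+i} = γ_i for i ∈ {1,…,k}. -/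
open Module

noncomputable section

theorem mem_rad_top {V : Type*} [AddCommGroup V] [Module ℝ V] (B : LinearMap.BilinForm ℝ V)
    (hB : ∀ x y, B x y = B y x) (v : V) : v ∈ rad B ⊤ ↔ ∀ w, B v w = 0 := by
  simp only [rad, top_inf_eq, LinearMap.BilinForm.mem_orthogonal_iff, Submodule.mem_top,
    forall_true_left]
  exact ⟨fun h w => by rw [hB]; exact h w, fun h w => by rw [hB]; exact h w⟩

theorem ext_li {M : Type*} [AddCommGroup M] [Module ℝ M] [FiniteDimensional ℝ M]
    {k r : ℕ} (h : k ≤ r) (hr : r ≤ finrank ℝ M) (v : Fin k → M) (hv : LinearIndependent ℝ v) :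
    ∃ v' : Fin r → M, LinearIndependent ℝ v' ∧ ∀ i, v' (Fin.castLE h i) = v i := by
  induction r, h using Nat.le_induction with
  | base => exact ⟨v, hv, fun i => rfl⟩
  | succ r h ih =>
    obtain ⟨v', hv', he⟩ := ih (by omega)
    obtain ⟨a, ha⟩ := exists_linearIndependent_snoc_of_lt_finrank hv' (by omega)
    refine ⟨_, ha, fun i => ?_⟩
    rw [← he i]
    exact Fin.snoc_castSucc (α := fun _ => M) a v' (Fin.castLE h i)

theorem exists_dual_vec {V : Type*} [AddCommGroup V] [Module ℝ V] [FiniteDimensional ℝ V]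
    (B : LinearMap.BilinForm ℝ V) (hB : ∀ x y, B x y = B y x) {ι κ : Type*}
    (F : ι → V) (G : κ → V) (hG : rad B ⊤ ≤ Submodule.span ℝ (Set.range G))
    (hli : LinearIndependent ℝ (Sum.elim F G)) (g : ι → ℝ) : ∃ w, ∀ i, B w (F i) = g i := by
  obtain ⟨f, hf⟩ := LinearMap.exists_extend
    ((Basis.span hli).constr ℝ (Sum.elim g (fun _ => (0 : ℝ))))
  have hf' : ∀ i, f (Sum.elim F G i) = Sum.elim g (fun _ => (0 : ℝ)) i := by
    intro i
    have := LinearMap.congr_fun hf (Basis.span hli i)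
    rw [Basis.constr_basis] at this
    rw [← this]
    simp [Basis.span_apply]
  have h0 : f ∈ (LinearMap.ker B).dualAnnihilator := by
    rw [Submodule.mem_dualAnnihilator]
    intro v hv
    have hv' : v ∈ rad B ⊤ := (mem_rad_top B hB v).2 fun w => by
      rw [LinearMap.mem_ker] at hv; simp [hv]
    have : Submodule.span ℝ (Set.range G) ≤ LinearMap.ker f := by
      rw [Submodule.span_le]
      rintro _ ⟨j, rfl⟩
      simpa using hf' (Sum.inr j)
    exact this (hG hv')
  rw [← LinearMap.range_dualMap_eq_dualAnnihilator_ker] at h0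
  obtain ⟨φ, hφ⟩ := h0
  obtain ⟨w, rfl⟩ := (Module.evalEquiv ℝ V).surjective φ
  refine ⟨w, fun i => ?_⟩
  have := LinearMap.congr_fun hφ (F i)
  simp only [LinearMap.dualMap_apply, Module.evalEquiv_apply, Dual.eval_apply] at this
  rw [hB, this]
  simpa using hf' (Sum.inl i)

structure Sys {V : Type*} [AddCommGroup V] [Module ℝ V] (B : LinearMap.BilinForm ℝ V)
    (a b : ℕ) (α β : ℕ → V) : Prop where
  αα : ∀ i < a, ∀ j < a, B (α i) (α j) = if i = j then 1 else 0
  ββ : ∀ i < b, ∀ j < b, B (β i) (β j) = if i = j then -1 else 0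
  αβ : ∀ i < a, ∀ j < b, B (α i) (β j) = 0

section
variable {V : Type*} [AddCommGroup V] [Module ℝ V]

def fam (a b : ℕ) {r : ℕ} (α β : ℕ → V) (γ : Fin r → V) : Fin a ⊕ Fin b ⊕ Fin r → V :=
  Sum.elim (fun i => α i) (Sum.elim (fun i => β i) γ)

theorem fam_form {B : LinearMap.BilinForm ℝ V} (hB : ∀ x y, B x y = B y x) {a b r : ℕ}
    {α β : ℕ → V} {γ : Fin r → V} (h : Sys B a b α β) (hγ : ∀ i w, B (γ i) w = 0) (i j) :
    B (fam a b α β γ i) (fam a b α β γ j) = if i = j then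
        Sum.elim (fun _ => (1 : ℝ)) (Sum.elim (fun _ => (-1 : ℝ)) fun _ => (0 : ℝ)) i
      else 0 := by
  have hγ' : ∀ w i, B w (γ i) = 0 := fun w i => by rw [hB]; exact hγ i w
  rcases i with i | i | i <;> rcases j with j | j | j <;>
    simp [fam, hγ, hγ', h.αα, h.ββ, h.αβ, Fin.ext_iff]
  rw [hB]; exact h.αβ _ j.2 _ i.2

theorem fam_li {B : LinearMap.BilinForm ℝ V} (hB : ∀ x y, B x y = B y x) {a b r : ℕ}
    {α β : ℕ → V} {γ : Fin r → V} (h : Sys B a b α β) (hγ : ∀ i w, B (γ i) w = 0)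
    (hli : LinearIndependent ℝ γ) : LinearIndependent ℝ (fam a b α β γ) := by
  have hf := fam_form hB h hγ
  rw [Fintype.linearIndependent_iff]
  intro g hg
  have key : ∀ i, g i * Sum.elim (fun _ => (1 : ℝ))
      (Sum.elim (fun _ => (-1 : ℝ)) fun _ => (0 : ℝ)) i = 0 := by
    intro i
    have := congrArg (fun v => B (fam a b α β γ i) v) hg
    simpa only [map_sum, map_smul, smul_eq_mul, hf, map_zero, mul_ite, mul_zero,
      Finset.sum_ite_eq, Finset.mem_univ, if_true] using this
  have h1 : ∀ i, g (Sum.inl i) = 0 := fun i => by simpa using key (Sum.inl i)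
  have h2 : ∀ i, g (Sum.inr (Sum.inl i)) = 0 := fun i => by simpa using key (Sum.inr (Sum.inl i))
  simp only [Fintype.sum_sum_type, h1, h2, fam, zero_smul, Finset.sum_const_zero, zero_add,
    Sum.elim_inr] at hg
  have h3 := Fintype.linearIndependent_iff.1 hli _ hg
  rintro (i | i | i)
  · exact h1 i
  · exact h2 i
  · exact h3 i

theorem sys_card [FiniteDimensional ℝ V] {B : LinearMap.BilinForm ℝ V}
    (hB : ∀ x y, B x y = B y x) {a b : ℕ}
    {α β : ℕ → V} (h : Sys B a b α β) : a + b ≤ finrank ℝ V := by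
  have := (fam_li (r := 0) (γ := Fin.elim0) hB h (fun i => i.elim0)
    linearIndependent_empty_type).fintype_card_le_finrank
  simpa using this

theorem sys_max {B : LinearMap.BilinForm ℝ V}
    (hB : ∀ x y, B x y = B y x) {a b : ℕ}
    {α β : ℕ → V} (h : Sys B a b α β)
    (hm : ∀ v, (∀ i < a, B (α i) v = 0) → (∀ j < b, B (β j) v = 0) → B v v = 0) (v : V) :
    v - ∑ i : Fin a, B (α i) v • α i + ∑ j : Fin b, B (β j) v • β j ∈ rad B ⊤ := by
  have main : ∀ v, ∃ v', v' = v - ∑ i : Fin a, B (α i) v • α i + ∑ j : Fin b, B (β j) v • β j ∧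
      (∀ i < a, B (α i) v' = 0) ∧ (∀ j < b, B (β j) v' = 0) := by
    intro v
    refine ⟨_, rfl, fun i hi => ?_, fun j hj => ?_⟩
    · have e1 : ∀ l : Fin a, B (α i) (α l) = if (⟨i, hi⟩ : Fin a) = l then 1 else 0 := fun l => by
        simp [h.αα i hi l l.2, Fin.ext_iff]
      have e2 : ∀ l : Fin b, B (α i) (β l) = 0 := fun l => h.αβ i hi l l.2
      simp [e1, e2]
    · have e1 : ∀ l : Fin b, B (β j) (β l) = if (⟨j, hj⟩ : Fin b) = l then -1 else 0 := fun l => by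
        simp [h.ββ j hj l l.2, Fin.ext_iff]
      have e2 : ∀ l : Fin a, B (β j) (α l) = 0 := fun l => by rw [hB]; exact h.αβ l l.2 j hj
      simp [e1, e2]
  rw [mem_rad_top B hB]
  intro w
  obtain ⟨v', hv', hva, hvb⟩ := main v
  obtain ⟨w', hw', hwa, hwb⟩ := main w
  rw [← hv']
  have hw : w = w' + ∑ i : Fin a, B (α i) w • α i - ∑ j : Fin b, B (β j) w • β j := by
    rw [hw']; abel
  have h1 := hm (v' + w') (fun i hi => by simp [hva i hi, hwa i hi])
    (fun i hi => by simp [hvb i hi, hwb i hi])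
  have h2 := hm v' hva hvb
  have h3 := hm w' hwa hwb
  have e1 : ∀ l : Fin a, B v' (α l) = 0 := fun l => by rw [hB]; exact hva l l.2
  have e2 : ∀ l : Fin b, B v' (β l) = 0 := fun l => by rw [hB]; exact hvb l l.2
  rw [hw]
  simp only [map_add, map_sub, map_sum, map_smul, e1, e2, smul_zero, Finset.sum_const_zero]
  simp only [map_add, LinearMap.add_apply, h2, h3, hB w' v'] at h1
  linarith

theorem sys_extend [FiniteDimensional ℝ V] {B : LinearMap.BilinForm ℝ V}
    (hB : ∀ x y, B x y = B y x) (n : ℕ) : ∀ {a b : ℕ} {α β : ℕ → V}, Sys B a b α β →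
    finrank ℝ V ≤ n + (a + b) →
    ∃ (a' b' : ℕ) (α' β' : ℕ → V), a ≤ a' ∧ b ≤ b' ∧ Sys B a' b' α' β' ∧
      (∀ i < a, α' i = α i) ∧ (∀ i < b, β' i = β i) ∧
      (∀ v, (∀ i < a', B (α' i) v = 0) → (∀ j < b', B (β' j) v = 0) → B v v = 0) := by
  induction n with
  | zero =>
    intro a b α β h hn
    refine ⟨a, b, α, β, le_rfl, le_rfl, h, fun _ _ => rfl, fun _ _ => rfl, fun v ha hb => ?_⟩
    have hli := fam_li (r := 0) (γ := Fin.elim0) hB h (fun i => i.elim0)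
      linearIndependent_empty_type
    have hc := hli.span_eq_top_of_card_eq_finrank' (by
      have := sys_card hB h
      simp; omega)
    have hle : Submodule.span ℝ (Set.range (fam a b α β (Fin.elim0 : Fin 0 → V))) ≤
        LinearMap.ker (B v) := by
      rw [Submodule.span_le]
      rintro _ ⟨i | i | i, rfl⟩
      · simpa [fam, hB v] using ha i i.2
      · simpa [fam, hB v] using hb i i.2
      · exact i.elim0
    have : v ∈ LinearMap.ker (B v) := hle (by rw [hc]; trivial)
    simpa using this
  | succ n ih =>
    intro a b α β h hn
    by_cases hm : ∀ v, (∀ i < a, B (α i) v = 0) → (∀ j < b, B (β j) v = 0) → B v v = 0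
    · exact ⟨a, b, α, β, le_rfl, le_rfl, h, fun _ _ => rfl, fun _ _ => rfl, hm⟩
    push Not at hm
    obtain ⟨v, hva, hvb, hv⟩ := hm
    have hva' : ∀ i < a, B v (α i) = 0 := fun i hi => by rw [hB]; exact hva i hi
    have hvb' : ∀ i < b, B v (β i) = 0 := fun i hi => by rw [hB]; exact hvb i hi
    rcases lt_or_gt_of_ne hv with hneg | hpos
    · have hs : Sys B a (b + 1) α (Function.update β b ((√(-B v v))⁻¹ • v)) := by
        have hsq : B v v = -(√(-B v v) * √(-B v v)) := by
          rw [Real.mul_self_sqrt (by linarith)]; ring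
        have hne : √(-B v v) ≠ 0 := (Real.sqrt_pos.2 (by linarith)).ne'
        refine ⟨h.αα, fun i hi j hj => ?_, fun i hi j hj => ?_⟩
        · rcases Nat.lt_succ_iff_lt_or_eq.1 hi with hi | rfl <;>
          rcases Nat.lt_succ_iff_lt_or_eq.1 hj with hj | rfl
          · rw [Function.update_of_ne hi.ne, Function.update_of_ne hj.ne, h.ββ i hi j hj]
          · simp [Function.update_of_ne hi.ne, hi.ne, hvb i hi]
          · simp [Function.update_of_ne hj.ne, hj.ne', hvb' j hj]
          · simp only [Function.update_self, map_smul, LinearMap.smul_apply, smul_eq_mul, if_true]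
            generalize √(-B v v) = c at *
            rw [hsq]; field_simp
        · rcases Nat.lt_succ_iff_lt_or_eq.1 hj with hj | rfl
          · rw [Function.update_of_ne hj.ne, h.αβ i hi j hj]
          · simp [hva i hi]
      obtain ⟨a', b', α', β', h1, h2, h3, h4, h5, h6⟩ := ih hs (by omega)
      refine ⟨a', b', α', β', h1, by omega, h3, h4, fun i hi => ?_, h6⟩
      rw [h5 i (by omega), Function.update_of_ne hi.ne]
    · have hs : Sys B (a + 1) b (Function.update α a ((√(B v v))⁻¹ • v)) β := by
        have hsq : B v v = (√(B v v) * √(B v v)) := by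
          rw [Real.mul_self_sqrt (by linarith)]
        have hne : √(B v v) ≠ 0 := (Real.sqrt_pos.2 (by linarith)).ne'
        refine ⟨fun i hi j hj => ?_, h.ββ, fun i hi j hj => ?_⟩
        · rcases Nat.lt_succ_iff_lt_or_eq.1 hi with hi | rfl <;>
          rcases Nat.lt_succ_iff_lt_or_eq.1 hj with hj | rfl
          · rw [Function.update_of_ne hi.ne, Function.update_of_ne hj.ne, h.αα i hi j hj]
          · simp [Function.update_of_ne hi.ne, hi.ne, hva i hi]
          · simp [Function.update_of_ne hj.ne, hj.ne', hva' j hj]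
          · simp only [Function.update_self, map_smul, LinearMap.smul_apply, smul_eq_mul, if_true]
            generalize √(B v v) = c at *
            rw [hsq]; field_simp
        · rcases Nat.lt_succ_iff_lt_or_eq.1 hi with hi | rfl
          · rw [Function.update_of_ne hi.ne, h.αβ i hi j hj]
          · simp [hvb' j hj]
      obtain ⟨a', b', α', β', h1, h2, h3, h4, h5, h6⟩ := ih hs (by omega)
      refine ⟨a', b', α', β', by omega, h2, h3, fun i hi => ?_, h5, h6⟩
      rw [h4 i (by omega), Function.update_of_ne hi.ne]

/-- Sylvester, abstractly: a basis that is `B`-orthogonal, positive on `ι`, nonpositive on `κ`. -/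
theorem posIdx_eq [FiniteDimensional ℝ V] (B : LinearMap.BilinForm ℝ V)
    {ι κ : Type*} [Fintype ι] [Fintype κ] [DecidableEq ι] [DecidableEq κ]
    (e : ι → V) (f : κ → V) (εf : κ → ℝ)
    (he : ∀ i j, B (e i) (e j) = if i = j then 1 else 0)
    (hf : ∀ i j, B (f i) (f j) = if i = j then εf i else 0)
    (hε : ∀ i, εf i ≤ 0)
    (hli : LinearIndependent ℝ (Sum.elim e f))
    (hsp : Submodule.span ℝ (Set.range (Sum.elim e f)) = ⊤) :
    posIdx B ⊤ = Fintype.card ι := by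
  have hle := hli.comp _ Sum.inl_injective
  have hlf := hli.comp _ Sum.inr_injective
  simp only [Sum.elim_comp_inl, Sum.elim_comp_inr] at hle hlf
  have hdim : finrank ℝ V = Fintype.card ι + Fintype.card κ := by
    rw [← Fintype.card_sum, ← finrank_span_eq_card hli, hsp, finrank_top]
  apply IsGreatest.csSup_eq
  constructor
  · refine ⟨Submodule.span ℝ (Set.range e), le_top, finrank_span_eq_card hle, ?_⟩
    intro v hv hv0
    obtain ⟨c, rfl⟩ := (Submodule.mem_span_range_iff_exists_fun ℝ).1 hv
    have hh : B (∑ i, c i • e i) (∑ i, c i • e i) = ∑ i, c i * (c i * 1) := by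
      simp [map_sum, LinearMap.sum_apply, he]
    rw [hh]
    have : ∃ i, c i ≠ 0 := by
      by_contra! hc
      exact hv0 (by simp [hc])
    obtain ⟨i, hi⟩ := this
    refine Finset.sum_pos' (fun i _ => by nlinarith [mul_self_nonneg (c i)])
      ⟨i, Finset.mem_univ _, ?_⟩
    have := mul_self_pos.2 hi
    linarith
  · rintro n ⟨P, -, rfl, hP⟩
    have hd : Disjoint P (Submodule.span ℝ (Set.range f)) := by
      rw [Submodule.disjoint_def]
      intro v hvP hv
      by_contra hv0
      have := hP v hvP hv0
      obtain ⟨c, rfl⟩ := (Submodule.mem_span_range_iff_exists_fun ℝ).1 hv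
      have hh : B (∑ i, c i • f i) (∑ i, c i • f i) = ∑ i, c i * (c i * εf i) := by
        simp [map_sum, LinearMap.sum_apply, hf]
      rw [hh] at this
      refine absurd this (not_lt.2 (Finset.sum_nonpos fun i _ => ?_))
      nlinarith [mul_nonneg (mul_self_nonneg (c i)) (neg_nonneg.2 (hε i))]
    have h1 := Submodule.finrank_add_finrank_le_of_disjoint hd
    rw [finrank_span_eq_card hlf, hdim] at h1
    omega

theorem negIdx_eq_posIdx (B : LinearMap.BilinForm ℝ V) (W : Submodule ℝ V) :
    negIdx B W = posIdx (-B) W := by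
  simp [negIdx, posIdx]

end
/-- An `(s,t,u)`-basis `{x₁,…,x_s, y₁,…,y_t, z₁,…,z_u}` of a subspace `W` of `V` with
`z_{u-k+1}, …, z_u ∈ rad V` (where `k = dim (W ∩ rad V)`) extends to a `(p,q,r)`-basis
`{α₁,…,α_p, β₁,…,β_q, γ₁,…,γ_r}` of `V` with `xᵢ = αᵢ`, `yᵢ = βᵢ`, `zᵢ = α_{s+i} + β_{t+i}`
for `i ≤ u-k`, and `z_{u-k+i} = γᵢ` for `i ≤ k`. -/
theorem extension_of_stu_basis {V : Type*} [AddCommGroup V] [Module ℝ V]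
    [FiniteDimensional ℝ V] (B : LinearMap.BilinForm ℝ V) (hB : ∀ x y, B x y = B y x)
    (p q r s t u k : ℕ) (W : Submodule ℝ V)
    (hsigV : signat B ⊤ = (p, q, r)) (hsigW : signat B W = (s, t, u))
    (hk : finrank ℝ (W ⊓ rad B ⊤ : Submodule ℝ V) = k)
    (x : Fin s → V) (y : Fin t → V) (z : Fin u → V)
    (hli : LinearIndependent ℝ (Sum.elim x (Sum.elim y z)))
    (hspan : Submodule.span ℝ (Set.range (Sum.elim x (Sum.elim y z))) = W)
    (hform : ∀ i j, B (Sum.elim x (Sum.elim y z) i) (Sum.elim x (Sum.elim y z) j) =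
      if i = j then
        Sum.elim (fun _ => (1 : ℝ)) (Sum.elim (fun _ => (-1 : ℝ)) fun _ => (0 : ℝ)) i
      else 0)
    (hzrad : ∀ i : Fin u, u - k ≤ (i : ℕ) → z i ∈ rad B ⊤) :
    ∃ (hsp : s + (u - k) ≤ p) (htq : t + (u - k) ≤ q) (hkr : k ≤ r)
      (b : Basis (Fin p ⊕ Fin q ⊕ Fin r) ℝ V),
      (∀ i j, B (b i) (b j) =
        if i = j then
          Sum.elim (fun _ => (1 : ℝ)) (Sum.elim (fun _ => (-1 : ℝ)) fun _ => (0 : ℝ)) i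
        else 0) ∧
      (∀ i : Fin s, b (Sum.inl (Fin.castLE (by omega) i)) = x i) ∧
      (∀ i : Fin t, b (Sum.inr (Sum.inl (Fin.castLE (by omega) i))) = y i) ∧
      (∀ i : Fin (u - k), z (Fin.castLE (Nat.sub_le u k) i) =
        b (Sum.inl ⟨s + (i : ℕ), by have := i.isLt; omega⟩) +
          b (Sum.inr (Sum.inl ⟨t + (i : ℕ), by have := i.isLt; omega⟩))) ∧
      (∀ i : Fin k, ∀ h : u - k + (i : ℕ) < u,
        z ⟨u - k + (i : ℕ), h⟩ = b (Sum.inr (Sum.inr (Fin.castLE hkr i)))) := by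
  simp only [signat, Prod.mk.injEq] at hsigV hsigW
  obtain ⟨hp, hq, hr⟩ := hsigV
  obtain ⟨-, -, hu⟩ := hsigW
  have hku : k ≤ u := by
    rw [← hk, ← hu]
    apply Submodule.finrank_mono
    intro v hv
    refine ⟨hv.1, ?_⟩
    have := (mem_rad_top B hB v).1 hv.2
    refine LinearMap.BilinForm.mem_orthogonal_iff.2 ?_
    intro w _
    exact (hB w v).trans (this w)
  obtain ⟨m, hm⟩ : ∃ m, m = u - k := ⟨_, rfl⟩
  simp only [← hm] at hzrad
  have hmu : m ≤ u := by omega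
  -- extend the radical part
  have hzr : ∀ i : Fin k, m + (i : ℕ) < u := fun i => by have := i.2; omega
  let zk : Fin k → V := fun i => z ⟨m + i, hzr i⟩
  let zm : Fin m → V := fun i => z (Fin.castLE hmu i)
  let F : Fin s ⊕ Fin t ⊕ Fin m → V := Sum.elim x (Sum.elim y zm)
  have hli2 : LinearIndependent ℝ (Sum.elim F zk) := by
    let σ : (Fin s ⊕ Fin t ⊕ Fin m) ⊕ Fin k → Fin s ⊕ Fin t ⊕ Fin u :=
      Sum.elim (Sum.elim Sum.inl (Sum.elim (fun i => Sum.inr (Sum.inl i))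
        (fun i => Sum.inr (Sum.inr (Fin.castLE hmu i)))))
        (fun i => Sum.inr (Sum.inr ⟨m + i, hzr i⟩))
    have hσ : Function.Injective σ := by
      rintro ((i | i | i) | i) ((j | j | j) | j) h <;>
        simp [σ, Fin.ext_iff] at h ⊢ <;> first | exact h | (have := i.2; have := j.2; omega)
    have := hli.comp σ hσ
    convert this using 1
    ext ((i | i | i) | i) <;> rfl
  obtain ⟨hF, hzk, hdis⟩ := linearIndependent_sum.1 hli2
  simp only [Sum.elim_comp_inl, Sum.elim_comp_inr] at hF hzk hdis
  have hzkR : ∀ i, zk i ∈ rad B ⊤ := fun i => hzrad _ (by simp)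
  have hFW : Submodule.span ℝ (Set.range F) ≤ W := by
    rw [← hspan, Submodule.span_le]
    rintro _ ⟨i | i | i, rfl⟩
    · exact Submodule.subset_span ⟨Sum.inl i, rfl⟩
    · exact Submodule.subset_span ⟨Sum.inr (Sum.inl i), rfl⟩
    · exact Submodule.subset_span ⟨Sum.inr (Sum.inr (Fin.castLE hmu i)), rfl⟩
  have hzkspan : Submodule.span ℝ (Set.range zk) = W ⊓ rad B ⊤ := by
    apply Submodule.eq_of_le_of_finrank_eq
    · rw [Submodule.span_le]
      rintro _ ⟨i, rfl⟩
      refine ⟨?_, hzkR i⟩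
      rw [← hspan]
      exact Submodule.subset_span ⟨Sum.inr (Sum.inr ⟨m + i, hzr i⟩), rfl⟩
    · rw [finrank_span_eq_card hzk, hk, Fintype.card_fin]
  have hkr : k ≤ r := by
    rw [← hk, ← hr]
    exact Submodule.finrank_mono inf_le_right
  obtain ⟨γ', hγ', hγz⟩ := ext_li (M := rad B ⊤) hkr hr.ge (fun i => ⟨zk i, hzkR i⟩)
    (LinearIndependent.of_comp (rad B ⊤).subtype hzk)
  let γ : Fin r → V := fun i => γ' i
  have hγli : LinearIndependent ℝ γ :=
    hγ'.map' (rad B ⊤).subtype (Submodule.ker_subtype _)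
  have hγR : ∀ i w, B (γ i) w = 0 := fun i => (mem_rad_top B hB _).1 (γ' i).2
  have hγspan : Submodule.span ℝ (Set.range γ) = rad B ⊤ := by
    apply Submodule.eq_of_le_of_finrank_eq
    · rw [Submodule.span_le]
      rintro _ ⟨i, rfl⟩
      exact (γ' i).2
    · rw [finrank_span_eq_card hγli, hr, Fintype.card_fin]
  have hFγ : LinearIndependent ℝ (Sum.elim F γ) := by
    refine linearIndependent_sum.2 ⟨hF, hγli, ?_⟩
    simp only [Sum.elim_comp_inl, Sum.elim_comp_inr]
    rw [hγspan, Submodule.disjoint_def]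
    intro v hv hvR
    rw [Submodule.disjoint_def] at hdis
    exact hdis v hv (by rw [hzkspan]; exact ⟨hFW hv, hvR⟩)
  -- dual vectors
  have hdual := fun i : Fin m => exists_dual_vec B hB F γ hγspan.ge hFγ
    (Sum.elim (fun _ => 0) (Sum.elim (fun _ => 0) (fun j => if i = j then 1 else 0)))
  choose w0 hw0 using hdual
  have hw0x : ∀ i j, B (w0 i) (x j) = 0 := fun i j => hw0 i (Sum.inl j)
  have hw0y : ∀ i j, B (w0 i) (y j) = 0 := fun i j => hw0 i (Sum.inr (Sum.inl j))
  have hw0z : ∀ i j, B (w0 i) (zm j) = if i = j then 1 else 0 :=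
    fun i j => hw0 i (Sum.inr (Sum.inr j))
  have hxx : ∀ i j, B (x i) (x j) = if i = j then 1 else 0 := fun i j => by
    simpa using hform (Sum.inl i) (Sum.inl j)
  have hyy : ∀ i j, B (y i) (y j) = if i = j then -1 else 0 := fun i j => by
    simpa using hform (Sum.inr (Sum.inl i)) (Sum.inr (Sum.inl j))
  have hzz : ∀ i j, B (zm i) (zm j) = 0 := fun i j => by
    simpa using hform (Sum.inr (Sum.inr (Fin.castLE hmu i))) (Sum.inr (Sum.inr (Fin.castLE hmu j)))
  have hxy : ∀ i j, B (x i) (y j) = 0 := fun i j => by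
    simpa using hform (Sum.inl i) (Sum.inr (Sum.inl j))
  have hxz : ∀ i j, B (x i) (zm j) = 0 := fun i j => by
    simpa using hform (Sum.inl i) (Sum.inr (Sum.inr (Fin.castLE hmu j)))
  have hyz : ∀ i j, B (y i) (zm j) = 0 := fun i j => by
    simpa using hform (Sum.inr (Sum.inl i)) (Sum.inr (Sum.inr (Fin.castLE hmu j)))
  have hzw0 : ∀ i j, B (zm i) (w0 j) = if j = i then 1 else 0 := fun i j => by
    rw [hB]; exact hw0z j i
  obtain ⟨w, hxw, hyw, hzw, hww⟩ : ∃ w : Fin m → V, (∀ i j, B (x i) (w j) = 0) ∧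
      (∀ i j, B (y i) (w j) = 0) ∧ (∀ i j, B (zm i) (w j) = if i = j then 1 else 0) ∧
      (∀ i j, B (w i) (w j) = 0) := by
    refine ⟨fun i => w0 i - ∑ l, (B (w0 i) (w0 l) / 2) • zm l, ?_, ?_, ?_, ?_⟩
    · intro i j
      simp [hxz, hB (x i) (w0 j), hw0x]
    · intro i j
      simp [hyz, hB (y i) (w0 j), hw0y]
    · intro i j
      simp [hzz, hzw0, eq_comm]
    · intro i j
      simp [hzz, hzw0, hw0z, LinearMap.sum_apply]
      rw [hB (w0 j) (w0 i)]; ring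
  have hyx : ∀ i j, B (y i) (x j) = 0 := fun i j => by rw [hB]; exact hxy j i
  have hzx : ∀ i j, B (zm i) (x j) = 0 := fun i j => by rw [hB]; exact hxz j i
  have hzy : ∀ i j, B (zm i) (y j) = 0 := fun i j => by rw [hB]; exact hyz j i
  have hwx : ∀ i j, B (w i) (x j) = 0 := fun i j => by rw [hB]; exact hxw j i
  have hwy : ∀ i j, B (w i) (y j) = 0 := fun i j => by rw [hB]; exact hyw j i
  have hwz : ∀ i j, B (w i) (zm j) = if i = j then 1 else 0 := fun i j => by
    rw [hB, hzw]; simp [eq_comm]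
  let A : Fin (s + m) → V := Fin.append x (fun i => (1 / 2 : ℝ) • zm i + w i)
  let C : Fin (t + m) → V := Fin.append y (fun i => (1 / 2 : ℝ) • zm i - w i)
  have hAA : ∀ i j, B (A i) (A j) = if i = j then 1 else 0 := by
    intro i j
    induction i using Fin.addCases <;> induction j using Fin.addCases <;>
      simp [A, hxx, hxz, hxw, hzx, hwx, hzz, hzw, hwz, hww, Fin.ext_iff] <;>
      (try split_ifs) <;> (try norm_num) <;> omega
  have hCC : ∀ i j, B (C i) (C j) = if i = j then -1 else 0 := by
    intro i j
    induction i using Fin.addCases <;> induction j using Fin.addCases <;>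
      simp [C, hyy, hyz, hyw, hzy, hwy, hzz, hzw, hwz, hww, Fin.ext_iff] <;>
      (try split_ifs) <;> (try norm_num) <;> omega
  have hAC : ∀ i j, B (A i) (C j) = 0 := by
    intro i j
    induction i using Fin.addCases <;> induction j using Fin.addCases <;>
      simp [A, C, hxy, hxz, hxw, hzy, hwy, hzz, hzw, hwz, hww]
  let α : ℕ → V := fun n => if h : n < s + m then A ⟨n, h⟩ else 0
  let β : ℕ → V := fun n => if h : n < t + m then C ⟨n, h⟩ else 0
  have hα : ∀ n (h : n < s + m), α n = A ⟨n, h⟩ := fun n h => dif_pos h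
  have hβ : ∀ n (h : n < t + m), β n = C ⟨n, h⟩ := fun n h => dif_pos h
  have hsys : Sys B (s + m) (t + m) α β := by
    refine ⟨fun i hi j hj => ?_, fun i hi j hj => ?_, fun i hi j hj => ?_⟩
    · rw [hα i hi, hα j hj, hAA]; simp
    · rw [hβ i hi, hβ j hj, hCC]; simp
    · rw [hα i hi, hβ j hj, hAC]
  obtain ⟨a', b', α', β', hsa, htb, hS, hαe, hβe, hmax⟩ :=
    sys_extend hB (finrank ℝ V) hsys (by omega)
  have hbli := fam_li hB hS hγR hγli
  have hform' := fam_form hB hS hγR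
  have hbsp : Submodule.span ℝ (Set.range (fam a' b' α' β' γ)) = ⊤ := by
    rw [eq_top_iff]
    intro v _
    have h1 := sys_max hB hS hmax v
    have h2 : v = (v - ∑ i : Fin a', B (α' i) v • α' i + ∑ j : Fin b', B (β' j) v • β' j)
      + ∑ i : Fin a', B (α' i) v • α' i - ∑ j : Fin b', B (β' j) v • β' j := by abel
    rw [h2]
    refine Submodule.sub_mem _ (Submodule.add_mem _ ?_ (Submodule.sum_mem _ fun i _ =>
      Submodule.smul_mem _ _ (Submodule.subset_span ⟨Sum.inl i, rfl⟩)))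
      (Submodule.sum_mem _ fun i _ =>
      Submodule.smul_mem _ _ (Submodule.subset_span ⟨Sum.inr (Sum.inl i), rfl⟩))
    rw [← hγspan] at h1
    refine Submodule.span_mono ?_ h1
    rintro _ ⟨i, rfl⟩
    exact ⟨Sum.inr (Sum.inr i), rfl⟩
  have hpa : a' = p := by
    rw [← hp]
    have := posIdx_eq B (fun i : Fin a' => α' i) (Sum.elim (fun i : Fin b' => β' i) γ)
      (Sum.elim (fun _ => (-1 : ℝ)) fun _ => (0 : ℝ))
      (fun i j => by simpa [fam] using hform' (Sum.inl i) (Sum.inl j))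
      (fun i j => by simpa [fam] using hform' (Sum.inr i) (Sum.inr j))
      (by rintro (i | i) <;> simp) hbli hbsp
    rw [this, Fintype.card_fin]
  have hqb : b' = q := by
    rw [← hq, negIdx_eq_posIdx]
    let σ : Fin b' ⊕ Fin a' ⊕ Fin r ≃ Fin a' ⊕ Fin b' ⊕ Fin r :=
      (Equiv.sumAssoc _ _ _).symm.trans
        (((Equiv.sumComm _ _).sumCongr (Equiv.refl _)).trans (Equiv.sumAssoc _ _ _))
    have hc : Sum.elim (fun i : Fin b' => β' i) (Sum.elim (fun i : Fin a' => α' i) γ)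
        = fam a' b' α' β' γ ∘ σ := by
      ext (i | i | i) <;> rfl
    have := posIdx_eq (-B) (fun i : Fin b' => β' i) (Sum.elim (fun i : Fin a' => α' i) γ)
      (Sum.elim (fun _ => (-1 : ℝ)) fun _ => (0 : ℝ))
      (fun i j => by
        have := hform' (Sum.inr (Sum.inl i)) (Sum.inr (Sum.inl j))
        simp only [fam, Sum.elim_inl, Sum.elim_inr] at this
        simp [this, apply_ite])
      (by
        rintro (i | i) (j | j)
        · have := hform' (Sum.inl i) (Sum.inl j)
          simp only [fam, Sum.elim_inl, Sum.elim_inr] at this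
          simp [this, apply_ite]
        · have := hform' (Sum.inl i) (Sum.inr (Sum.inr j))
          simp only [fam, Sum.elim_inl, Sum.elim_inr] at this
          simp [this]
        · simp [hγR]
        · simp [hγR])
      (by rintro (i | i) <;> simp)
      (by rw [hc]; exact hbli.comp _ σ.injective)
      (by rw [hc, σ.surjective.range_comp]; exact hbsp)
    rw [this, Fintype.card_fin]
  clear hp hq
  subst hpa hqb
  subst hm
  refine ⟨hsa, htb, hkr, Basis.mk hbli hbsp.ge, ?_, ?_, ?_, ?_, ?_⟩
  · intro i j
    simpa only [Basis.mk_apply] using hform' i j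
  · intro i
    rw [Basis.mk_apply]
    change α' i = x i
    rw [hαe i (by omega), hα i (by omega)]
    exact Fin.append_left x _ i
  · intro i
    rw [Basis.mk_apply]
    change β' i = y i
    rw [hβe i (by omega), hβ i (by omega)]
    exact Fin.append_left y _ i
  · intro i
    rw [Basis.mk_apply, Basis.mk_apply]
    change zm i = α' (s + i) + β' (t + i)
    rw [hαe _ (by omega), hα _ (by omega), hβe _ (by omega), hβ _ (by omega)]
    have e1 : A ⟨s + i, by omega⟩ = (1 / 2 : ℝ) • zm i + w i := Fin.append_right x _ i
    have e2 : C ⟨t + i, by omega⟩ = (1 / 2 : ℝ) • zm i - w i := Fin.append_right y _ i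
    rw [e1, e2]
    module
  · intro i h
    rw [Basis.mk_apply]
    change zk i = (γ' (Fin.castLE hkr i) : V)
    rw [hγz i]
end
end

section
/- Let V be a finite-dimensional real vector space with a nondegenerate symmetric bilinear form ⟨·,·⟩, and let W₁ and W₂ be subspaces of V with sign(W₁) = sign(W₂). Then every linear isometry f : W₁ → W₂ (i.e. a linear bijection satisfying ⟨f(x),f(y)⟩ = ⟨x,y⟩ for all x,y ∈ W₁) extends to a linear isometry f̃ : V → V with f̃|_{W₁} = f. -/
open Module

noncomputable section

section Helpers

variable {V : Type*} [AddCommGroup V] [Module ℝ V]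

/-- Reflections. -/
lemma exists_refl (B : LinearMap.BilinForm ℝ V) (hB : ∀ x y, B x y = B y x)
    (a : V) (ha : B a a ≠ 0) :
    ∃ R : V →ₗ[ℝ] V, (∀ x y, B (R x) (R y) = B x y) ∧
      ∀ x, R x = x - (2 * B a x / B a a) • a := by
  refine ⟨LinearMap.id - ((2 / B a a) • (B a)).smulRight a, ?_, ?_⟩
  · intro x y
    simp only [LinearMap.sub_apply, LinearMap.id_apply, LinearMap.smulRight_apply,
      LinearMap.smul_apply, map_sub, map_smul, smul_eq_mul]
    rw [hB x a]
    field_simp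
    ring
  · intro x
    simp only [LinearMap.sub_apply, LinearMap.id_apply, LinearMap.smulRight_apply,
      LinearMap.smul_apply, smul_eq_mul]
    congr 2
    ring

lemma exists_move (B : LinearMap.BilinForm ℝ V) (hB : ∀ x y, B x y = B y x)
    (x y : V) (hx : B x x ≠ 0) (hxy : B y y = B x x) :
    ∃ R : V →ₗ[ℝ] V, (∀ u v, B (R u) (R v) = B u v) ∧ R x = y ∧
      ∀ z, B x z = 0 → B y z = 0 → R z = z := by
  by_cases h : B (x - y) (x - y) = 0
  · have e : B x y = B x x := by
      simp only [map_sub, LinearMap.sub_apply, hB y x, hxy] at h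
      linarith
    have h2 : B (x + y) (x + y) = 4 * B x x := by
      simp only [map_add, LinearMap.add_apply, hB y x, hxy, e]
      ring
    obtain ⟨R, hR, hR'⟩ := exists_refl B hB (x + y) (by rw [h2]; positivity)
    obtain ⟨S, hS, hS'⟩ := exists_refl B hB y (by rw [hxy]; exact hx)
    refine ⟨S ∘ₗ R, fun u v => by simp [hR, hS], ?_, ?_⟩
    · have h3 : R x = - y := by
        rw [hR', h2]
        have : 2 * B (x + y) x / (4 * B x x) = 1 := by
          simp only [map_add, LinearMap.add_apply, hB y x, e]
          field_simp
          ring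
        rw [this]; module
      rw [LinearMap.comp_apply, h3, hS', map_neg]
      have : 2 * -B y y / B y y = -2 := by
        rw [hxy]; field_simp
      rw [this]; module
    · intro z h1 h2
      have : R z = z := by rw [hR']; simp [h1, h2]
      rw [LinearMap.comp_apply, this, hS']; simp [h2]
  · obtain ⟨R, hR, hR'⟩ := exists_refl B hB (x - y) h
    refine ⟨R, hR, ?_, ?_⟩
    · have : 2 * B (x - y) x / B (x - y) (x - y) = 1 := by
        rw [div_eq_one_iff_eq h]
        simp only [map_sub, LinearMap.sub_apply, hB y x, hxy]
        ring
      rw [hR', this]; module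
    · intro z h1 h2
      rw [hR']; simp [h1, h2]

variable [FiniteDimensional ℝ V]

/-- An isometric endomorphism of a nondegenerate space is an equivalence. -/
lemma isom_equiv (B : LinearMap.BilinForm ℝ V)
    (hnd : ∀ x : V, (∀ y : V, B x y = 0) → x = 0) (F : V →ₗ[ℝ] V)
    (hF : ∀ x y, B (F x) (F y) = B x y) : ∃ G : V ≃ₗ[ℝ] V, ∀ x, G x = F x := by
  have hi : Function.Injective F := by
    rw [injective_iff_map_eq_zero]
    intro x hx
    apply hnd
    intro y
    rw [← hF, hx]; simp
  exact ⟨LinearEquiv.ofInjectiveEndo F hi, fun x => rfl⟩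

/-- Witt extension from a nondegenerate subspace. -/
lemma witt_nondeg (B : LinearMap.BilinForm ℝ V) (hB : ∀ x y, B x y = B y x)
    (hnd : ∀ x : V, (∀ y : V, B x y = 0) → x = 0) (f : V →ₗ[ℝ] V) (n : ℕ) :
    ∀ W : Submodule ℝ V, finrank ℝ W = n →
      (∀ x ∈ W, (∀ y ∈ W, B x y = 0) → x = 0) →
      (∀ x ∈ W, ∀ y ∈ W, B (f x) (f y) = B x y) →
      ∃ F : V →ₗ[ℝ] V, (∀ x y, B (F x) (F y) = B x y) ∧ ∀ w ∈ W, F w = f w := by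
  induction n using Nat.strong_induction_on with
  | _ n ih =>
  intro W hn hW hf
  by_cases hz : ∀ w ∈ W, B w w = 0
  · refine ⟨LinearMap.id, fun _ _ => rfl, fun w hw => ?_⟩
    have : w = 0 := by
      apply hW w hw
      intro y hy
      have h1 := hz (w + y) (W.add_mem hw hy)
      simp only [map_add, LinearMap.add_apply, hz w hw, hz y hy, hB y w] at h1
      linarith
    simp [this]
  push Not at hz
  obtain ⟨w, hw, hww⟩ := hz
  set U : Submodule ℝ V := W ⊓ LinearMap.ker (B w) with hU
  have hmem : ∀ u, u ∈ U ↔ u ∈ W ∧ B w u = 0 := fun u => by simp [hU]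
  have hdec : ∀ x ∈ W, x - (B w x / B w w) • w ∈ U := by
    intro x hx
    rw [hmem]
    refine ⟨W.sub_mem hx (W.smul_mem _ hw), ?_⟩
    simp only [map_sub, map_smul, smul_eq_mul]
    field_simp
    ring
  have hlt : U < W := by
    refine lt_of_le_of_ne inf_le_left ?_
    intro h
    rw [← h, hmem] at hw
    exact hww hw.2
  obtain ⟨F, hF, hFU⟩ := ih (finrank ℝ U) (hn ▸ Submodule.finrank_lt_finrank_of_lt hlt) U rfl
    (by
      intro x hx hxU
      rw [hmem] at hx
      apply hW x hx.1
      intro y hy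
      have h1 := hxU _ (hdec y hy)
      simpa [hB x w, hx.2] using h1)
    (fun x hx y hy => hf x ((hmem x).1 hx).1 y ((hmem y).1 hy).1)
  obtain ⟨G, hG⟩ := isom_equiv B hnd F hF
  have hGB : ∀ x y, B (G.symm x) y = B x (F y) := by
    intro x y
    rw [← hF, ← hG, G.apply_symm_apply]
  obtain ⟨R, hR, hRw, hRz⟩ := exists_move B hB w (G.symm (f w)) hww (by
    rw [hGB, ← hG, G.apply_symm_apply, hf w hw w hw])
  refine ⟨F ∘ₗ R, fun x y => by simp [hF, hR], ?_⟩
  intro x hx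
  have hu := hdec x hx
  have h1 : F (R (x - (B w x / B w w) • w)) = f (x - (B w x / B w w) • w) := by
    rw [hRz, hFU _ hu]
    · exact ((hmem _).1 hu).2
    · rw [hGB, hFU _ hu, hf w hw _ ((hmem _).1 hu).1]
      exact ((hmem _).1 hu).2
  have h2 : F (R w) = f w := by
    rw [hRw, ← hG, G.apply_symm_apply]
  simp only [map_sub, map_smul, h2] at h1
  simpa using h1

/-- Every functional is represented by a vector. -/
lemma exists_repr (B : LinearMap.BilinForm ℝ V)
    (hnd : ∀ x : V, (∀ y : V, B x y = 0) → x = 0) (l : V →ₗ[ℝ] ℝ) :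
    ∃ v, ∀ y, B v y = l y := by
  have hi : Function.Injective (B : V →ₗ[ℝ] (V →ₗ[ℝ] ℝ)) := by
    rw [injective_iff_map_eq_zero]
    intro x hx
    exact hnd x fun y => by rw [hx]; rfl
  have hs := (LinearMap.injective_iff_surjective_of_finrank_eq_finrank
    (f := (B : V →ₗ[ℝ] Module.Dual ℝ V)) (Subspace.dual_finrank_eq (K := ℝ) (V := V)).symm).1 hi
  obtain ⟨v, hv⟩ := hs l
  exact ⟨v, fun y => by rw [hv]⟩

/-- Witt extension in general. -/
lemma witt_general (B : LinearMap.BilinForm ℝ V) (hB : ∀ x y, B x y = B y x)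
    (hnd : ∀ x : V, (∀ y : V, B x y = 0) → x = 0) (n : ℕ) :
    ∀ (W : Submodule ℝ V) (f : V →ₗ[ℝ] V), finrank ℝ V - finrank ℝ W = n →
      (∀ x ∈ W, f x = 0 → x = 0) →
      (∀ x ∈ W, ∀ y ∈ W, B (f x) (f y) = B x y) →
      ∃ F : V →ₗ[ℝ] V, (∀ x y, B (F x) (F y) = B x y) ∧ ∀ w ∈ W, F w = f w := by
  induction n using Nat.strong_induction_on with
  | _ n ih =>
  intro W f hn hinj hf
  by_cases hW : ∀ x ∈ W, (∀ y ∈ W, B x y = 0) → x = 0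
  · exact witt_nondeg B hB hnd f _ W rfl hW hf
  push Not at hW
  obtain ⟨r, hr, hrW, hr0⟩ := hW
  obtain ⟨v, hv⟩ : ∃ v, B r v ≠ 0 := by
    by_contra! h
    exact hr0 (hnd r h)
  have hvW : v ∉ W := fun h => hv (hrW v h)
  -- a left inverse of `f` on `W`
  have hker : LinearMap.ker (f ∘ₗ W.subtype) = ⊥ := by
    rw [LinearMap.ker_eq_bot, injective_iff_map_eq_zero]
    intro x hx
    exact Subtype.ext (hinj x x.2 hx)
  obtain ⟨g, hg⟩ := LinearMap.exists_leftInverse_of_injective _ hker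
  have hg' : ∀ w (hw : w ∈ W), (g (f w) : V) = w := by
    intro w hw
    have := LinearMap.congr_fun hg ⟨w, hw⟩
    simpa using congrArg Subtype.val this
  obtain ⟨v₀, hv₀⟩ := exists_repr B hnd (B v ∘ₗ W.subtype ∘ₗ g)
  have hv₀' : ∀ w ∈ W, B v₀ (f w) = B v w := by
    intro w hw
    rw [hv₀]
    simp [hg' w hw]
  set t : ℝ := (B v v - B v₀ v₀) / (2 * B r v) with ht
  set v' : V := v₀ + t • f r with hv'
  have hv'W : ∀ w ∈ W, B v' (f w) = B v w := by
    intro w hw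
    simp [hv', hv₀' w hw, hf r hr w hw, hrW w hw]
  have hv'v' : B v' v' = B v v := by
    have e1 : B v₀ (f r) = B r v := by rw [hv₀' r hr, hB]
    have e2 : B (f r) v₀ = B r v := by rw [hB, e1]
    have e3 : B (f r) (f r) = 0 := by rw [hf r hr r hr, hrW r hr]
    simp only [hv', map_add, LinearMap.add_apply, map_smul, LinearMap.smul_apply, smul_eq_mul,
      e1, e2, e3, ht]
    field_simp
    ring
  obtain ⟨φ, hφv, hφ⟩ := Submodule.exists_le_ker_of_notMem hvW
  have hφW : ∀ w ∈ W, φ w = 0 := fun w hw => hφ hw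
  set f' : V →ₗ[ℝ] V := f + ((φ v)⁻¹ • φ).smulRight (v' - f v) with hf'
  have hf'W : ∀ w ∈ W, f' w = f w := by
    intro w hw
    simp [hf', hφW w hw]
  have hf'v : f' v = v' := by
    simp [hf', hφv]
  have hdec : ∀ x ∈ W ⊔ Submodule.span ℝ {v}, ∃ w ∈ W, ∃ c : ℝ, x = w + c • v := by
    intro x hx
    obtain ⟨w, hw, z, hz, rfl⟩ := Submodule.mem_sup.1 hx
    obtain ⟨c, rfl⟩ := Submodule.mem_span_singleton.1 hz
    exact ⟨w, hw, c, rfl⟩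
  have hlt : W < W ⊔ Submodule.span ℝ {v} := by
    refine lt_of_le_of_ne le_sup_left ?_
    intro h
    apply hvW
    rw [h]
    exact Submodule.mem_sup_right (Submodule.mem_span_singleton_self v)
  have h1 := Submodule.finrank_lt_finrank_of_lt hlt
  have h2 := Submodule.finrank_le (W ⊔ Submodule.span ℝ {v})
  obtain ⟨F, hF, hFW⟩ := ih (finrank ℝ V - finrank ℝ ↥(W ⊔ Submodule.span ℝ {v})) (by omega)
    (W ⊔ Submodule.span ℝ {v}) f' rfl
    (by
      intro x hx h0
      obtain ⟨w, hw, c, rfl⟩ := hdec x hx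
      rw [map_add, map_smul, hf'W w hw, hf'v] at h0
      have h3 : B (f w + c • v') (f r) = 0 := by rw [h0]; simp
      have hc : c = 0 := by
        simp only [map_add, LinearMap.add_apply, map_smul, LinearMap.smul_apply, smul_eq_mul,
          hf w hw r hr, hv'W r hr] at h3
        rw [hB w r, hrW w hw, hB v r] at h3
        simpa [hv] using h3
      subst hc
      simp only [zero_smul, add_zero] at h0 ⊢
      exact hinj w hw h0)
    (by
      intro x hx y hy
      obtain ⟨w, hw, c, rfl⟩ := hdec x hx
      obtain ⟨z, hz, d, rfl⟩ := hdec y hy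
      have e1 : B (f w) v' = B w v := by rw [hB, hv'W w hw, hB]
      simp only [map_add, map_smul, hf'W w hw, hf'W z hz, hf'v, LinearMap.add_apply,
        LinearMap.smul_apply, smul_eq_mul, hf w hw z hz, hv'W z hz, e1, hv'v'])
  refine ⟨F, hF, fun w hw => ?_⟩
  rw [hFW w (Submodule.mem_sup_left hw), hf'W w hw]

end Helpers

/-- If `B` is nondegenerate and `W₁`, `W₂` are subspaces of the same signature, then every
linear isometry `f : W₁ → W₂` extends to a linear isometry of `V`. -/
theorem isometry_extends {V : Type*} [AddCommGroup V] [Module ℝ V] [FiniteDimensional ℝ V]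
    (B : LinearMap.BilinForm ℝ V) (hB : ∀ x y, B x y = B y x)
    (hnd : ∀ x : V, (∀ y : V, B x y = 0) → x = 0)
    (W₁ W₂ : Submodule ℝ V) (hsig : signat B W₁ = signat B W₂)
    (f : W₁ ≃ₗ[ℝ] W₂) (hf : ∀ x y : W₁, B (f x : V) (f y : V) = B (x : V) (y : V)) :
    ∃ F : V ≃ₗ[ℝ] V, (∀ x y : V, B (F x) (F y) = B x y) ∧
      ∀ w : W₁, F (w : V) = (f w : V) := by
  obtain ⟨g, hg⟩ := LinearMap.exists_extend (W₂.subtype ∘ₗ f.toLinearMap)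
  have hg' : ∀ w : W₁, g (w : V) = (f w : V) := fun w => by
    simpa using LinearMap.congr_fun hg w
  obtain ⟨F, hF, hFW⟩ := witt_general B hB hnd _ W₁ g rfl
    (by
      intro x hx h0
      have h1 := hg' ⟨x, hx⟩
      rw [h0] at h1
      have h2 : f ⟨x, hx⟩ = 0 := Subtype.ext h1.symm
      simpa using h2)
    (by
      intro x hx y hy
      rw [hg' ⟨x, hx⟩, hg' ⟨y, hy⟩]
      exact hf _ _)
  obtain ⟨G, hG⟩ := isom_equiv B hnd F hF
  refine ⟨G, fun x y => by rw [hG, hG, hF], fun w => ?_⟩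
  rw [hG, hFW w w.2, hg']
end
end

section
/- Let V be a finite-dimensional real vector space with a symmetric bilinear form ⟨·,·⟩ (not necessarily nondegenerate), and let U and W be subspaces of V. Then the following are equivalent: (1) there exists a linear isometry f : V → V with respect to ⟨·,·⟩ such that U = f(W); (2) sign(U) = sign(W) and dim(U ∩ rad(V)) = dim(W ∩ rad(V)). -/
open Module

noncomputable section

section Helpers

variable {V : Type*} [AddCommGroup V] [Module ℝ V] [FiniteDimensional ℝ V]

/-- The quadratic form of `B` restricted to `A`. -/
def qf (B : LinearMap.BilinForm ℝ V) (A : Submodule ℝ V) : QuadraticForm ℝ A :=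
  LinearMap.BilinMap.toQuadraticMap (B.restrict A)

lemma qf_apply (B : LinearMap.BilinForm ℝ V) (A : Submodule ℝ V) (x : A) :
    qf B A x = B x x := rfl

lemma negIdx_eq (B : LinearMap.BilinForm ℝ V) (A : Submodule ℝ V) :
    negIdx B A = posIdx (-B) A := by
  simp [negIdx, posIdx]

lemma posIdx_isGreatest (B : LinearMap.BilinForm ℝ V) (A : Submodule ℝ V) :
    IsGreatest {k | ∃ P : Submodule ℝ V, P ≤ A ∧ finrank ℝ P = k ∧
      ∀ x ∈ P, x ≠ 0 → 0 < B x x} (sigPos (qf B A)) := by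
  convert sigPos_isGreatest (qf B A) using 1
  ext k
  constructor
  · rintro ⟨P, hPA, hk, hP⟩
    refine ⟨P.comap A.subtype, ?_, ?_⟩
    · rw [← hk]
      exact (Submodule.comapSubtypeEquivOfLe hPA).finrank_eq
    · intro x hx
      exact hP _ x.2 (by simpa using hx)
  · rintro ⟨P, hk, hP⟩
    refine ⟨P.map A.subtype, Submodule.map_subtype_le _ _, ?_, ?_⟩
    · rw [← hk]
      exact Submodule.finrank_map_subtype_eq _ _
    · rintro _ ⟨x, hx, rfl⟩ h0
      exact hP ⟨x, hx⟩ (by simpa using h0)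

lemma posIdx_eq_s13 (B : LinearMap.BilinForm ℝ V) (A : Submodule ℝ V) :
    posIdx B A = sigPos (qf B A) :=
  (posIdx_isGreatest B A).csSup_eq

lemma qf_neg (B : LinearMap.BilinForm ℝ V) (A : Submodule ℝ V) :
    qf (-B) A = - qf B A := by
  ext x
  simp [qf_apply]

lemma negIdx_eq' (B : LinearMap.BilinForm ℝ V) (A : Submodule ℝ V) :
    negIdx B A = sigNeg (qf B A) := by
  rw [negIdx_eq, posIdx_eq_s13, qf_neg, sigPos_neg]

lemma mem_rad_iff (B : LinearMap.BilinForm ℝ V) (A : Submodule ℝ V) (x : V) :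
    x ∈ rad B A ↔ x ∈ A ∧ ∀ y ∈ A, B y x = 0 := by
  simp [rad, LinearMap.BilinForm.mem_orthogonal_iff, LinearMap.BilinForm.isOrtho_def]

lemma rad_finrank (B : LinearMap.BilinForm ℝ V) (hB : ∀ x y, B x y = B y x)
    (A : Submodule ℝ V) :
    finrank ℝ (rad B A) = finrank ℝ (qf B A).radical := by
  have : rad B A = (qf B A).radical.map A.subtype := by
    ext x
    rw [mem_rad_iff]
    constructor
    · rintro ⟨hx, h⟩
      refine ⟨⟨x, hx⟩, ?_, rfl⟩
      rw [SetLike.mem_coe, QuadraticMap.mem_radical_iff']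
      refine ⟨h x hx, fun n => ?_⟩
      have h1 := h x hx
      have h2 := h n n.2
      have h3 := hB x n
      simp only [qf_apply, Submodule.coe_add, map_add, LinearMap.add_apply]
      linarith
    · rintro ⟨x, hx, rfl⟩
      rw [SetLike.mem_coe, QuadraticMap.mem_radical_iff'] at hx
      refine ⟨x.2, fun y hy => ?_⟩
      have h1 := hx.1
      have h2 := hx.2 ⟨y, hy⟩
      have h3 := hB x y
      simp only [qf_apply, Submodule.coe_add, map_add, LinearMap.add_apply] at h1 h2
      simp only [Submodule.coe_subtype]
      linarith
  rw [this, Submodule.finrank_map_subtype_eq]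

lemma idx_sum (B : LinearMap.BilinForm ℝ V) (hB : ∀ x y, B x y = B y x)
    (A : Submodule ℝ V) :
    posIdx B A + negIdx B A + finrank ℝ (rad B A) = finrank ℝ A := by
  rw [posIdx_eq_s13, negIdx_eq', rad_finrank B hB]
  exact QuadraticForm.sigPos_add_sigNeg_add_radical

/-- Invariance of the signature under isometries. -/
lemma idx_congr (B : LinearMap.BilinForm ℝ V) (hB : ∀ x y, B x y = B y x)
    {A C : Submodule ℝ V} (e : A ≃ₗ[ℝ] C) (he : ∀ x y : A, B (e x) (e y) = B x y) :
    posIdx B A = posIdx B C ∧ negIdx B A = negIdx B C ∧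
      finrank ℝ (rad B A) = finrank ℝ (rad B C) := by
  have h : QuadraticMap.Equivalent (qf B A) (qf B C) := ⟨⟨e, fun x => he x x⟩⟩
  rw [posIdx_eq_s13, posIdx_eq_s13, negIdx_eq', negIdx_eq', rad_finrank B hB, rad_finrank B hB]
  exact ⟨h.sigPos_eq, h.sigNeg_eq, h.rank_radical_eq⟩

lemma polarize (B : LinearMap.BilinForm ℝ V) (hB : ∀ x y, B x y = B y x)
    {A C : Submodule ℝ V} (e : A →ₗ[ℝ] C) (he : ∀ x : A, B (e x) (e x) = B x x)
    (x y : A) : B (e x) (e y) = B x y := by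
  have h := he (x + y)
  have h1 := he x
  have h2 := he y
  have h3 := hB x y
  have h4 := hB (e x) (e y)
  simp only [map_add, Submodule.coe_add, LinearMap.add_apply] at h
  linarith

lemma perm_of_card {ι κ : Type*} [Fintype ι] [Fintype κ] (w : ι → SignType) (w' : κ → SignType)
    (h : ∀ s, Nat.card {i // w i = s} = Nat.card {i // w' i = s}) :
    ∃ σ : ι ≃ κ, ∀ i, w' (σ i) = w i := by
  have e : ∀ s, ({i // w i = s} ≃ {i // w' i = s}) := fun s =>
    (Finite.card_eq.1 (h s)).some
  refine ⟨(Equiv.sigmaFiberEquiv w).symm.trans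
    ((Equiv.sigmaCongrRight e).trans (Equiv.sigmaFiberEquiv w')), fun i => ?_⟩
  exact (e (w i) ⟨i, rfl⟩).2

lemma equivalent_of_sig {M N : Type*} [AddCommGroup M] [Module ℝ M] [FiniteDimensional ℝ M]
    [AddCommGroup N] [Module ℝ N] [FiniteDimensional ℝ N]
    (Q : QuadraticForm ℝ M) (Q' : QuadraticForm ℝ N)
    (hp : sigPos Q = sigPos Q') (hn : sigNeg Q = sigNeg Q')
    (hd : finrank ℝ M = finrank ℝ N) : QuadraticMap.Equivalent Q Q' := by
  obtain ⟨w, hw⟩ := Q.equivalent_signType_weighted_sum_squared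
  obtain ⟨w', hw'⟩ := Q'.equivalent_signType_weighted_sum_squared
  have hr : finrank ℝ Q.radical = finrank ℝ Q'.radical := by
    have h1 := QuadraticForm.sigPos_add_sigNeg_add_radical (Q := Q)
    have h2 := QuadraticForm.sigPos_add_sigNeg_add_radical (Q := Q')
    omega
  rw [QuadraticForm.sigPos_of_equiv_weightedSumSquares hw,
    QuadraticForm.sigPos_of_equiv_weightedSumSquares hw'] at hp
  rw [QuadraticForm.sigNeg_of_equiv_weightedSumSquares hw,
    QuadraticForm.sigNeg_of_equiv_weightedSumSquares hw'] at hn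
  rw [QuadraticForm.finrank_radical_of_equiv_weightedSumSquares hw,
    QuadraticForm.finrank_radical_of_equiv_weightedSumSquares hw'] at hr
  obtain ⟨σ, hσ⟩ := perm_of_card w w' (by
    have a1 : ∀ s : SignType, (0 : ℝ) < (s : ℝ) ↔ s = 1 := by
      intro s; cases s <;> simp
    have a2 : ∀ s : SignType, (s : ℝ) < 0 ↔ s = -1 := by
      intro s; cases s <;> simp
    have a3 : ∀ s : SignType, (s : ℝ) = 0 ↔ s = 0 := by
      intro s; cases s <;> simp
    simp only [a1] at hp
    simp only [a2] at hn
    simp only [a3] at hr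
    intro s
    cases s
    · exact hr
    · exact hn
    · exact hp)
  refine hw.trans (QuadraticMap.Equivalent.trans ?_ hw'.symm)
  refine ⟨⟨LinearEquiv.funCongrLeft ℝ ℝ σ.symm, fun x => ?_⟩⟩
  simp only [QuadraticMap.weightedSumSquares_apply]
  rw [← σ.sum_comp]
  simp [hσ, LinearEquiv.funCongrLeft_apply, LinearMap.funLeft_apply]

/-- Sylvester: equal signatures and dimensions give isometric subspaces. -/
lemma exists_isometry (B : LinearMap.BilinForm ℝ V) (hB : ∀ x y, B x y = B y x)
    {A C : Submodule ℝ V} (hp : posIdx B A = posIdx B C) (hn : negIdx B A = negIdx B C)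
    (hd : finrank ℝ A = finrank ℝ C) :
    ∃ e : A ≃ₗ[ℝ] C, ∀ x y : A, B (e x) (e y) = B x y := by
  rw [posIdx_eq_s13, posIdx_eq_s13] at hp
  rw [negIdx_eq', negIdx_eq'] at hn
  obtain ⟨e⟩ := equivalent_of_sig (qf B A) (qf B C) hp hn hd
  exact ⟨e.toLinearEquiv, polarize B hB e.toLinearEquiv.toLinearMap fun x => e.map_app x⟩

lemma posIdx_sup_le (B : LinearMap.BilinForm ℝ V) {A C : Submodule ℝ V}
    (hAC : ∀ x ∈ A, ∀ y ∈ C, B x y = 0) (hCA : ∀ x ∈ A, ∀ y ∈ C, B y x = 0)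
    (hd : Disjoint A C) :
    posIdx B A + posIdx B C ≤ posIdx B (A ⊔ C) := by
  obtain ⟨P, hPA, hP, hPp⟩ := (posIdx_isGreatest B A).1
  obtain ⟨P', hPC, hP', hPp'⟩ := (posIdx_isGreatest B C).1
  rw [posIdx_eq_s13, posIdx_eq_s13, posIdx_eq_s13, ← hP, ← hP']
  apply (posIdx_isGreatest B (A ⊔ C)).2
  refine ⟨P ⊔ P', sup_le_sup hPA hPC, ?_, ?_⟩
  · have := Submodule.finrank_sup_add_finrank_inf_eq P P'
    rw [(hd.mono hPA hPC).eq_bot, finrank_bot] at this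
    omega
  · intro z hz h0
    obtain ⟨x, hx, y, hy, rfl⟩ := Submodule.mem_sup.1 hz
    have h1 := hAC x (hPA hx) y (hPC hy)
    have h2 := hCA x (hPA hx) y (hPC hy)
    simp only [map_add, LinearMap.add_apply, h1, h2, add_zero, zero_add]
    by_cases hx0 : x = 0
    · have hy0 : y ≠ 0 := by rintro rfl; simp [hx0] at h0
      simpa [hx0] using hPp' y hy hy0
    · have h3 := hPp x hx hx0
      by_cases hy0 : y = 0
      · simpa [hy0] using h3
      · have := hPp' y hy hy0
        linarith

lemma idx_sup (B : LinearMap.BilinForm ℝ V) (hB : ∀ x y, B x y = B y x) {A C : Submodule ℝ V}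
    (hAC : ∀ x ∈ A, ∀ y ∈ C, B x y = 0) (hd : Disjoint A C) :
    posIdx B (A ⊔ C) = posIdx B A + posIdx B C ∧
      negIdx B (A ⊔ C) = negIdx B A + negIdx B C := by
  have hCA : ∀ x ∈ A, ∀ y ∈ C, B y x = 0 := fun x hx y hy => by rw [hB]; exact hAC x hx y hy
  have h1 := posIdx_sup_le B hAC hCA hd
  have h2 := posIdx_sup_le (-B) (A := A) (C := C) (fun x hx y hy => by simp [hAC x hx y hy])
    (fun x hx y hy => by simp [hCA x hx y hy]) hd
  rw [← negIdx_eq, ← negIdx_eq, ← negIdx_eq] at h2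
  have h3 := idx_sum B hB A
  have h4 := idx_sum B hB C
  have h5 := idx_sum B hB (A ⊔ C)
  have h6 := Submodule.finrank_sup_add_finrank_inf_eq A C
  rw [hd.eq_bot, finrank_bot] at h6
  have h7 : rad B A ⊔ rad B C ≤ rad B (A ⊔ C) := by
    apply sup_le
    · intro x hx
      rw [mem_rad_iff] at hx ⊢
      refine ⟨Submodule.mem_sup_left hx.1, fun y hy => ?_⟩
      obtain ⟨a, ha, c, hc, rfl⟩ := Submodule.mem_sup.1 hy
      simp [hx.2 a ha, hCA x hx.1 c hc]
    · intro x hx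
      rw [mem_rad_iff] at hx ⊢
      refine ⟨Submodule.mem_sup_right hx.1, fun y hy => ?_⟩
      obtain ⟨a, ha, c, hc, rfl⟩ := Submodule.mem_sup.1 hy
      simp [hx.2 c hc, hAC a ha x hx.1]
  have h8 := Submodule.finrank_mono h7
  have h9 := Submodule.finrank_sup_add_finrank_inf_eq (rad B A) (rad B C)
  have h10 : rad B A ⊓ rad B C = ⊥ :=
    (hd.mono (inf_le_left : rad B A ≤ A) (inf_le_left : rad B C ≤ C)).eq_bot
  rw [h10, finrank_bot] at h9
  omega

/-- Two linear maps on disjoint subspaces have a common extension. -/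
lemma exists_glue {A C : Submodule ℝ V} (hd : Disjoint A C) (φ : A →ₗ[ℝ] V) (ψ : C →ₗ[ℝ] V) :
    ∃ G : V →ₗ[ℝ] V, (∀ x : A, G x = φ x) ∧ ∀ x : C, G x = ψ x := by
  obtain ⟨D, hCD, hD⟩ := hd.symm.exists_isCompl
  obtain ⟨ψ', hψ'⟩ := LinearMap.exists_extend ψ
  refine ⟨LinearMap.ofIsCompl hD.symm φ (ψ'.comp D.subtype), fun x => ?_, fun x => ?_⟩
  · simp
  · have := LinearMap.ofIsCompl_apply_right hD.symm (φ := φ) (ψ := ψ'.comp D.subtype)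
      ⟨x, hCD x.2⟩
    rw [this, ← hψ']
    rfl

/-- Change the value of a linear map at a vector outside `W`. -/
lemma exists_update (W : Submodule ℝ V) (G : V →ₗ[ℝ] V) {y : V} (hy : y ∉ W) (y' : V) :
    ∃ G' : V →ₗ[ℝ] V, (∀ w ∈ W, G' w = G w) ∧ G' y = y' := by
  obtain ⟨f, hf, hfW⟩ := Submodule.exists_dual_map_eq_bot_of_notMem hy inferInstance
  have hfW' : ∀ w ∈ W, f w = 0 := by
    intro w hw
    have : f w ∈ W.map f := ⟨w, hw, rfl⟩
    rw [hfW] at this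
    simpa using this
  refine ⟨G + (f.smulRight ((f y)⁻¹ • (y' - G y))), fun w hw => ?_, ?_⟩
  · simp [hfW' w hw]
  · simp [smul_smul, hf]

/-- Representability of functionals. -/
lemma exists_rep {M : Type*} [AddCommGroup M] [Module ℝ M] [FiniteDimensional ℝ M]
    (T : V →ₗ[ℝ] Dual ℝ M) (ψ : Dual ℝ M) (h : ∀ m, (∀ v, T v m = 0) → ψ m = 0) :
    ∃ v, T v = ψ := by
  have : ψ ∈ (LinearMap.range T).dualCoannihilator.dualAnnihilator := by
    rw [Submodule.mem_dualAnnihilator]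
    intro m hm
    rw [Submodule.mem_dualCoannihilator] at hm
    exact h m fun v => hm _ ⟨v, rfl⟩
  rw [Subspace.dualCoannihilator_dualAnnihilator_eq] at this
  exact this

lemma mem_radTop (B : LinearMap.BilinForm ℝ V) (x : V) :
    x ∈ rad B ⊤ ↔ ∀ y, B y x = 0 := by
  simp [mem_rad_iff]

/-- Partial isometry on `W`, compatible with the radical. -/
def PIso (B : LinearMap.BilinForm ℝ V) (W : Submodule ℝ V) (G : V →ₗ[ℝ] V) : Prop :=
  (∀ x ∈ W, ∀ y ∈ W, B (G x) (G y) = B x y) ∧ (∀ x ∈ W, G x = 0 → x = 0) ∧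
    ∀ x ∈ W, G x ∈ rad B ⊤ ↔ x ∈ rad B ⊤

/-- One-vector extension. -/
lemma piso_extend (B : LinearMap.BilinForm ℝ V) (hB : ∀ x y, B x y = B y x)
    {W : Submodule ℝ V} {G : V →ₗ[ℝ] V} (hG : PIso B W G) {y y' : V} (hy : y ∉ W)
    (hy' : y' ∉ W.map G) (h1 : ∀ w ∈ W, B y' (G w) = B y w) (h2 : B y' y' = B y y)
    (h3 : ∀ w ∈ W, ∀ c : ℝ, G w + c • y' ∈ rad B ⊤ ↔ w + c • y ∈ rad B ⊤) :
    ∃ G' : V →ₗ[ℝ] V, (∀ w ∈ W, G' w = G w) ∧ PIso B (W ⊔ Submodule.span ℝ {y}) G' := by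
  obtain ⟨G', hG', hGy⟩ := exists_update W G hy y'
  refine ⟨G', hG', ?_, ?_, ?_⟩
  · intro x hx z hz
    obtain ⟨w, hw, u, hu, rfl⟩ := Submodule.mem_sup.1 hx
    obtain ⟨c, rfl⟩ := Submodule.mem_span_singleton.1 hu
    obtain ⟨w', hw', u, hu, rfl⟩ := Submodule.mem_sup.1 hz
    obtain ⟨c', rfl⟩ := Submodule.mem_span_singleton.1 hu
    simp only [map_add, map_smul, LinearMap.add_apply, LinearMap.smul_apply, hG' w hw,
      hG' w' hw', hGy, h2, hG.1 w hw w' hw', h1 w' hw', hB (G w) y', h1 w hw, hB w y]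
  · intro x hx h0
    obtain ⟨w, hw, u, hu, rfl⟩ := Submodule.mem_sup.1 hx
    obtain ⟨c, rfl⟩ := Submodule.mem_span_singleton.1 hu
    simp only [map_add, map_smul, hG' w hw, hGy] at h0
    have hc : c = 0 := by
      by_contra hc
      apply hy'
      refine ⟨-c⁻¹ • w, W.smul_mem _ hw, ?_⟩
      rw [map_smul, eq_neg_of_add_eq_zero_left h0]
      simp [smul_smul, hc]
    subst hc
    simp only [zero_smul, add_zero] at h0 ⊢
    exact hG.2.1 w hw h0
  · intro x hx
    obtain ⟨w, hw, u, hu, rfl⟩ := Submodule.mem_sup.1 hx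
    obtain ⟨c, rfl⟩ := Submodule.mem_span_singleton.1 hu
    simp only [map_add, map_smul, hG' w hw, hGy]
    exact h3 w hw c

lemma finrank_map_piso {B : LinearMap.BilinForm ℝ V} {W : Submodule ℝ V} {G : V →ₗ[ℝ] V}
    (hG : PIso B W G) {W' : Submodule ℝ V} (h : W' ≤ W) :
    finrank ℝ (W'.map G) = finrank ℝ W' := by
  have : Function.Injective (G.domRestrict W') := by
    rw [injective_iff_map_eq_zero]
    intro x hx
    exact Subtype.ext (hG.2.1 x (h x.2) hx)
  rw [← LinearMap.finrank_range_of_inj this, LinearMap.range_domRestrict]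

/-- Case of the radical of `V` not contained in `W`. -/
lemma piso_step_one (B : LinearMap.BilinForm ℝ V) (hB : ∀ x y, B x y = B y x)
    {W : Submodule ℝ V} {G : V →ₗ[ℝ] V} (hG : PIso B W G) (hR : ¬ rad B ⊤ ≤ W) :
    ∃ y, y ∉ W ∧ ∃ G' : V →ₗ[ℝ] V, (∀ w ∈ W, G' w = G w) ∧
      PIso B (W ⊔ Submodule.span ℝ {y}) G' := by
  have hR' : ¬ rad B ⊤ ≤ W.map G := by
    intro h
    have h1 : rad B ⊤ ≤ (W ⊓ rad B ⊤).map G := by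
      intro x hx
      obtain ⟨w, hw, rfl⟩ := h hx
      exact ⟨w, ⟨hw, (hG.2.2 w hw).1 hx⟩, rfl⟩
    have h2 := Submodule.finrank_mono h1
    rw [finrank_map_piso hG inf_le_left] at h2
    have h3 := Submodule.eq_of_le_of_finrank_le (inf_le_right : W ⊓ rad B ⊤ ≤ rad B ⊤) h2
    exact hR (inf_eq_right.1 h3)
  obtain ⟨y, hyR, hy⟩ := SetLike.not_le_iff_exists.1 hR
  obtain ⟨y', hyR', hy'⟩ := SetLike.not_le_iff_exists.1 hR'
  have e1 := (mem_radTop B y).1 hyR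
  have e2 := (mem_radTop B y').1 hyR'
  refine ⟨y, hy, piso_extend B hB hG hy hy' (fun w _ => ?_) ?_ (fun w hw c => ?_)⟩
  · rw [hB, e2, hB, e1]
  · rw [e2, e1]
  · rw [Submodule.add_mem_iff_left _ (Submodule.smul_mem _ _ hyR'),
      Submodule.add_mem_iff_left _ (Submodule.smul_mem _ _ hyR)]
    exact hG.2.2 w hw

/-- Case of the radical of `W` not contained in the radical of `V`. -/
lemma piso_step_two (B : LinearMap.BilinForm ℝ V) (hB : ∀ x y, B x y = B y x)
    {W : Submodule ℝ V} {G : V →ₗ[ℝ] V} (hG : PIso B W G) (hR : ¬ rad B W ≤ rad B ⊤) :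
    ∃ y, y ∉ W ∧ ∃ G' : V →ₗ[ℝ] V, (∀ w ∈ W, G' w = G w) ∧
      PIso B (W ⊔ Submodule.span ℝ {y}) G' := by
  obtain ⟨x, hxW, hx⟩ := SetLike.not_le_iff_exists.1 hR
  rw [mem_rad_iff] at hxW
  obtain ⟨hxW, hxo⟩ := hxW
  rw [mem_radTop] at hx
  push Not at hx
  obtain ⟨y, hy⟩ := hx
  obtain ⟨z, hz⟩ := exists_rep (M := W) (B.compl₁₂ LinearMap.id (G.comp W.subtype))
    ((B y).comp W.subtype) (by
      intro m hm
      have : G m ∈ rad B ⊤ := (mem_radTop B _).2 hm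
      exact (mem_radTop B _).1 ((hG.2.2 m m.2).1 this) y)
  have hz' : ∀ w ∈ W, B z (G w) = B y w := fun w hw => LinearMap.congr_fun hz ⟨w, hw⟩
  have hxx : ∀ w ∈ W, B (G x) (G w) = 0 := fun w hw => by
    rw [hG.1 x hxW w hw, hB, hxo w hw]
  obtain ⟨c, hc⟩ : ∃ c : ℝ, B (z + c • G x) (z + c • G x) = B y y := by
    refine ⟨(B y y - B z z) / (2 * B y x), ?_⟩
    simp only [map_add, map_smul, LinearMap.add_apply, LinearMap.smul_apply, hxx x hxW,
      hB (G x) z, hz' x hxW, smul_eq_mul]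
    field_simp
    ring
  have h1 : ∀ w ∈ W, B (z + c • G x) (G w) = B y w := fun w hw => by
    simp [hxx w hw, hz' w hw]
  refine ⟨y, fun h => hy (hxo y h), piso_extend B hB hG (fun h => hy (hxo y h)) ?_ h1 hc ?_⟩
  · rintro ⟨w, hw, h⟩
    apply hy
    rw [← h1 x hxW, ← h, hB, hxx w hw]
  · intro w hw a
    constructor
    · intro h
      have ha : a = 0 := by
        have := (mem_radTop B _).1 h (G x)
        rw [map_add, hxx w hw, zero_add, map_smul, hB, h1 x hxW] at this
        simpa [hy] using this
      subst ha
      simp only [zero_smul, add_zero] at h ⊢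
      exact (hG.2.2 w hw).1 h
    · intro h
      have ha : a = 0 := by
        have := (mem_radTop B _).1 h x
        rw [map_add, hB x w, hxo w hw, zero_add, map_smul, hB] at this
        simpa [hy] using this
      subst ha
      simp only [zero_smul, add_zero] at h ⊢
      exact (hG.2.2 w hw).2 h

/-- Orthogonal complement of a subspace whose radical is that of `V`. -/
lemma exists_orth_compl (B : LinearMap.BilinForm ℝ V) (hB : ∀ x y, B x y = B y x)
    {W : Submodule ℝ V} (h1 : rad B ⊤ ≤ W) (h2 : rad B W ≤ rad B ⊤) :
    ∃ Y : Submodule ℝ V, Disjoint W Y ∧ W ⊔ Y = ⊤ ∧ ∀ x ∈ W, ∀ y ∈ Y, B x y = 0 := by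
  have hR : rad B ⊤ = B.orthogonal ⊤ := by simp [rad]
  have hle : rad B ⊤ ≤ B.orthogonal W := by
    rw [hR]; exact LinearMap.BilinForm.orthogonal_le le_top
  obtain ⟨Y, hY, hYs⟩ := IsModularLattice.exists_disjoint_and_sup_eq hle
  have hYW : Y ≤ B.orthogonal W := hYs ▸ le_sup_right
  refine ⟨Y, ?_, ?_, ?_⟩
  · rw [Submodule.disjoint_def] at hY ⊢
    intro x hx hxY
    exact hY x (h2 ⟨hx, hYW hxY⟩) hxY
  · have e1 : W ⊔ Y = W ⊔ B.orthogonal W := by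
      rw [← hYs, ← sup_assoc, sup_eq_left.2 h1]
    rw [e1]
    apply Submodule.eq_top_of_finrank_eq
    have e2 := LinearMap.BilinForm.finrank_add_finrank_orthogonal (B := B)
      (fun x y h => by rw [hB]; exact h) W
    have e3 := Submodule.finrank_sup_add_finrank_inf_eq W (B.orthogonal W)
    have e4 : W ⊓ B.orthogonal W = W ⊓ B.orthogonal ⊤ := by
      rw [← hR, inf_eq_right.2 h1]
      exact le_antisymm h2 (le_inf h1 hle)
    rw [e4] at e3
    omega
  · intro x hx y hy
    exact hYW hy x hx

/-- Base case. -/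
lemma piso_base (B : LinearMap.BilinForm ℝ V) (hB : ∀ x y, B x y = B y x)
    {W : Submodule ℝ V} {G : V →ₗ[ℝ] V} (hG : PIso B W G) (h1 : rad B ⊤ ≤ W)
    (h2 : rad B W ≤ rad B ⊤) :
    ∃ f : V ≃ₗ[ℝ] V, (∀ x y : V, B (f x) (f y) = B x y) ∧ ∀ w ∈ W, f w = G w := by
  have h1' : rad B ⊤ ≤ W.map G := by
    have h3 : (rad B ⊤).map G ≤ rad B ⊤ := by
      rintro _ ⟨x, hx, rfl⟩
      exact (hG.2.2 x (h1 hx)).2 hx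
    have h4 := Submodule.eq_of_le_of_finrank_eq h3 (finrank_map_piso hG h1)
    rw [← h4]
    exact Submodule.map_mono h1
  have h2' : rad B (W.map G) ≤ rad B ⊤ := by
    intro x hx
    rw [mem_rad_iff] at hx
    obtain ⟨⟨w, hw, rfl⟩, hx⟩ := hx
    refine (hG.2.2 w hw).2 (h2 ((mem_rad_iff _ _ _).2 ⟨hw, fun y hy => ?_⟩))
    rw [← hG.1 y hy w hw]
    exact hx _ ⟨y, hy, rfl⟩
  obtain ⟨Y, hd, hs, ho⟩ := exists_orth_compl B hB h1 h2
  obtain ⟨Y', hd', hs', ho'⟩ := exists_orth_compl B hB h1' h2'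
  have hfr := finrank_map_piso hG le_rfl
  let e0 : W ≃ₗ[ℝ] W.map G := LinearEquiv.ofBijective (G.submoduleMap W)
    ⟨by
      rw [injective_iff_map_eq_zero]
      intro x hx
      exact Subtype.ext (hG.2.1 x x.2 (congrArg Subtype.val hx)),
      LinearMap.submoduleMap_surjective G W⟩
  have hi := idx_congr B hB e0 (fun x y => hG.1 x x.2 y y.2)
  have i1 := idx_sup B hB ho hd
  have i2 := idx_sup B hB ho' hd'
  have f1 := Submodule.finrank_sup_add_finrank_inf_eq W Y
  have f2 := Submodule.finrank_sup_add_finrank_inf_eq (W.map G) Y'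
  rw [hs, hd.eq_bot] at f1
  rw [hs', hd'.eq_bot] at f2
  rw [hs] at i1
  rw [hs'] at i2
  obtain ⟨e, he⟩ := exists_isometry B hB (A := Y) (C := Y') (by omega) (by omega) (by omega)
  obtain ⟨F, hFW, hFY⟩ := exists_glue hd (G.comp W.subtype) (Y'.subtype.comp e.toLinearMap)
  have hFW' : ∀ w ∈ W, F w = G w := fun w hw => hFW ⟨w, hw⟩
  have hFY' : ∀ y (hy : y ∈ Y), F y = e ⟨y, hy⟩ := fun y hy => hFY ⟨y, hy⟩
  have hsurj : Function.Surjective F := by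
    intro z
    have hz : z ∈ W.map G ⊔ Y' := hs' ▸ Submodule.mem_top
    obtain ⟨_, ⟨w, hw, rfl⟩, y', hy', rfl⟩ := Submodule.mem_sup.1 hz
    refine ⟨w + (e.symm ⟨y', hy'⟩ : Y), ?_⟩
    rw [map_add, hFW' w hw, hFY]
    simp
  refine ⟨LinearEquiv.ofBijective F ⟨LinearMap.injective_iff_surjective.2 hsurj, hsurj⟩,
    fun x z => ?_, fun w hw => hFW' w hw⟩
  have hx : x ∈ W ⊔ Y := hs ▸ Submodule.mem_top
  have hz : z ∈ W ⊔ Y := hs ▸ Submodule.mem_top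
  obtain ⟨w, hw, y, hy, rfl⟩ := Submodule.mem_sup.1 hx
  obtain ⟨w', hw', y', hy', rfl⟩ := Submodule.mem_sup.1 hz
  have t1 := ho w hw y' hy'
  have t2 := ho w' hw' y hy
  have t3 := ho' (G w) ⟨w, hw, rfl⟩ (e ⟨y', hy'⟩) (e ⟨y', hy'⟩).2
  have t4 := ho' (G w') ⟨w', hw', rfl⟩ (e ⟨y, hy⟩) (e ⟨y, hy⟩).2
  have t5 := he ⟨y, hy⟩ ⟨y', hy'⟩
  rw [hB] at t2 t4
  change B (F (w + y)) (F (w' + y')) = _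
  simp only [map_add, LinearMap.add_apply, hFW' w hw, hFW' w' hw',
    hFY' y hy, hFY' y' hy', t1, t2, t3, t4, t5, hG.1 w hw w' hw']

/-- Witt's extension theorem, for possibly degenerate forms. -/
lemma witt (B : LinearMap.BilinForm ℝ V) (hB : ∀ x y, B x y = B y x) (n : ℕ) :
    ∀ (W : Submodule ℝ V) (G : V →ₗ[ℝ] V), finrank ℝ V - finrank ℝ W = n → PIso B W G →
    ∃ f : V ≃ₗ[ℝ] V, (∀ x y : V, B (f x) (f y) = B x y) ∧ ∀ w ∈ W, f w = G w := by
  induction n using Nat.strong_induction_on with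
  | _ n ih =>
  intro W G hn hG
  have step : (∃ y, y ∉ W ∧ ∃ G' : V →ₗ[ℝ] V, (∀ w ∈ W, G' w = G w) ∧
      PIso B (W ⊔ Submodule.span ℝ {y}) G') →
      ∃ f : V ≃ₗ[ℝ] V, (∀ x y : V, B (f x) (f y) = B x y) ∧ ∀ w ∈ W, f w = G w := by
    rintro ⟨y, hy, G', hG', hP⟩
    have hlt : W < W ⊔ Submodule.span ℝ {y} := by
      refine lt_of_le_of_ne le_sup_left fun h => hy ?_
      rw [h]
      exact Submodule.mem_sup_right (Submodule.mem_span_singleton_self y)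
    have l1 := Submodule.finrank_lt_finrank_of_lt hlt
    have l2 := Submodule.finrank_le (W ⊔ Submodule.span ℝ {y})
    obtain ⟨f, hf, hfG⟩ := ih _ (by omega) _ G' rfl hP
    exact ⟨f, hf, fun w hw => (hfG w (Submodule.mem_sup_left hw)).trans (hG' w hw)⟩
  by_cases h1 : rad B ⊤ ≤ W
  · by_cases h2 : rad B W ≤ rad B ⊤
    · exact piso_base B hB hG h1 h2
    · exact step (piso_step_two B hB hG h2)
  · exact step (piso_step_one B hB hG h1)

/-- Splitting off the intersection with the radical of `V`. -/
lemma exists_split (B : LinearMap.BilinForm ℝ V) (W : Submodule ℝ V) :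
    ∃ A : Submodule ℝ V, Disjoint A (W ⊓ rad B ⊤) ∧ A ⊔ (W ⊓ rad B ⊤) = W ∧
      (∀ x ∈ A, ∀ y ∈ W ⊓ rad B ⊤, B x y = 0) ∧ ∀ x ∈ A, x ∈ rad B ⊤ → x = 0 := by
  obtain ⟨A, hA, hs⟩ := IsModularLattice.exists_disjoint_and_sup_eq
    (inf_le_left : W ⊓ rad B ⊤ ≤ W)
  refine ⟨A, hA.symm, by rw [sup_comm]; exact hs, fun x _ y hy => (mem_radTop B y).1 hy.2 x,
    fun x hx hxR => ?_⟩
  have hxW : x ∈ W := by rw [← hs]; exact Submodule.mem_sup_right hx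
  exact Submodule.disjoint_def.1 hA x ⟨hxW, hxR⟩ hx

lemma exists_piso (B : LinearMap.BilinForm ℝ V) (hB : ∀ x y, B x y = B y x)
    (U W : Submodule ℝ V) (hs : signat B U = signat B W)
    (hr : finrank ℝ (U ⊓ rad B ⊤ : Submodule ℝ V) = finrank ℝ (W ⊓ rad B ⊤ : Submodule ℝ V)) :
    ∃ G : V →ₗ[ℝ] V, PIso B W G ∧ W.map G = U := by
  simp only [signat, Prod.mk.injEq] at hs
  obtain ⟨A, hAd, hAs, hAo, hA0⟩ := exists_split B W
  obtain ⟨A', hAd', hAs', hAo', hA0'⟩ := exists_split B U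
  let e2 : (W ⊓ rad B ⊤ : Submodule ℝ V) ≃ₗ[ℝ] (U ⊓ rad B ⊤ : Submodule ℝ V) :=
    LinearEquiv.ofFinrankEq _ _ hr.symm
  have hR : ∀ x ∈ rad B ⊤, ∀ y, B x y = 0 := fun x hx y => by
    rw [hB]; exact (mem_radTop B x).1 hx y
  have he2 : ∀ x y, B (e2 x) (e2 y) = B x y := fun x y => by
    rw [hR _ (e2 x).2.2, hR _ x.2.2]
  have i0 := idx_congr B hB e2 he2
  have i1 := idx_sup B hB hAo hAd
  have i2 := idx_sup B hB hAo' hAd'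
  rw [hAs] at i1
  rw [hAs'] at i2
  have d1 := idx_sum B hB W
  have d2 := idx_sum B hB U
  have f1 := Submodule.finrank_sup_add_finrank_inf_eq A (W ⊓ rad B ⊤)
  have f2 := Submodule.finrank_sup_add_finrank_inf_eq A' (U ⊓ rad B ⊤)
  rw [hAs, hAd.eq_bot] at f1
  rw [hAs', hAd'.eq_bot] at f2
  obtain ⟨e1, he1⟩ := exists_isometry B hB (A := A) (C := A') (by omega) (by omega) (by omega)
  obtain ⟨G, hG1, hG2⟩ := exists_glue hAd (A'.subtype.comp e1.toLinearMap)
    ((U ⊓ rad B ⊤ : Submodule ℝ V).subtype.comp e2.toLinearMap)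
  have hdec : ∀ w ∈ W, ∃ a : A, ∃ k : (W ⊓ rad B ⊤ : Submodule ℝ V), w = a + k ∧
      G w = e1 a + e2 k := by
    intro w hw
    rw [← hAs] at hw
    obtain ⟨a, ha, k, hk, rfl⟩ := Submodule.mem_sup.1 hw
    refine ⟨⟨a, ha⟩, ⟨k, hk⟩, rfl, ?_⟩
    rw [map_add]
    exact congrArg₂ _ (hG1 ⟨a, ha⟩) (hG2 ⟨k, hk⟩)
  have hrad : ∀ w ∈ W, G w ∈ rad B ⊤ ↔ w ∈ rad B ⊤ := by
    intro w hw
    obtain ⟨a, k, rfl, h⟩ := hdec w hw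
    rw [h, Submodule.add_mem_iff_left _ (e2 k).2.2, Submodule.add_mem_iff_left _ k.2.2]
    constructor
    · intro h
      have h3 : e1 a = 0 := Subtype.ext (hA0' _ (e1 a).2 h)
      rw [(LinearEquiv.map_eq_zero_iff e1).1 h3]
      simp
    · intro h
      have h3 : a = 0 := Subtype.ext (hA0 _ a.2 h)
      rw [h3]
      simp
  refine ⟨G, ⟨?_, ?_, hrad⟩, ?_⟩
  · intro x hx y hy
    obtain ⟨a, k, rfl, h⟩ := hdec x hx
    obtain ⟨a', k', rfl, h'⟩ := hdec y hy
    rw [h, h']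
    simp only [map_add, LinearMap.add_apply, he1, hR _ (e2 k).2.2, hR _ k.2.2,
      (mem_radTop B _).1 (e2 k').2.2, (mem_radTop B _).1 k'.2.2]
  · intro x hx h0
    have hxR : x ∈ rad B ⊤ := (hrad x hx).1 (by rw [h0]; exact Submodule.zero_mem _)
    have h3 := hG2 ⟨x, hx, hxR⟩
    rw [h0] at h3
    have h4 : e2 ⟨x, hx, hxR⟩ = 0 := Subtype.ext h3.symm
    exact congrArg Subtype.val ((LinearEquiv.map_eq_zero_iff e2).1 h4)
  · apply le_antisymm
    · rintro _ ⟨w, hw, rfl⟩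
      obtain ⟨a, k, rfl, h⟩ := hdec w hw
      rw [h]
      exact U.add_mem ((le_of_le_of_eq le_sup_left hAs' : A' ≤ U) (e1 a).2) (e2 k).2.1
    · refine le_of_eq_of_le hAs'.symm (sup_le ?_ ?_)
      · intro x hx
        refine ⟨e1.symm ⟨x, hx⟩, ?_, ?_⟩
        · exact (le_of_le_of_eq le_sup_left hAs : A ≤ W) (e1.symm ⟨x, hx⟩).2
        · rw [hG1]; simp
      · intro x hx
        refine ⟨e2.symm ⟨x, hx⟩, (e2.symm ⟨x, hx⟩).2.1, ?_⟩
        rw [hG2]; simp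

end Helpers

/-- Two subspaces `U`, `W` of `V` are carried to each other by a linear isometry of `V` if and
only if `sign U = sign W` and `dim (U ∩ rad V) = dim (W ∩ rad V)`. -/
theorem subspaces_isometric_iff {V : Type*} [AddCommGroup V] [Module ℝ V]
    [FiniteDimensional ℝ V] (B : LinearMap.BilinForm ℝ V) (hB : ∀ x y, B x y = B y x)
    (U W : Submodule ℝ V) :
    (∃ f : V ≃ₗ[ℝ] V, (∀ x y : V, B (f x) (f y) = B x y) ∧ U = W.map f.toLinearMap) ↔
      (signat B U = signat B W ∧
        finrank ℝ (U ⊓ rad B ⊤ : Submodule ℝ V) = finrank ℝ (W ⊓ rad B ⊤ : Submodule ℝ V)) := by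
  constructor
  · rintro ⟨f, hf, rfl⟩
    have h := idx_congr B hB (f.submoduleMap W) (fun x y => hf x y)
    refine ⟨?_, ?_⟩
    · simp only [signat]
      erw [← h.1, ← h.2.1, ← h.2.2]
    · have : W.map f.toLinearMap ⊓ rad B ⊤ = (W ⊓ rad B ⊤).map f.toLinearMap := by
        have hr : ∀ x, f x ∈ rad B ⊤ ↔ x ∈ rad B ⊤ := by
          intro x
          rw [mem_radTop, mem_radTop]
          constructor
          · intro h y
            rw [← hf]
            exact h _
          · intro h y
            rw [← f.apply_symm_apply y, hf]
            exact h _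
        ext x
        constructor
        · rintro ⟨⟨w, hw, rfl⟩, hx⟩
          exact ⟨w, ⟨hw, (hr w).1 hx⟩, rfl⟩
        · rintro ⟨w, ⟨hw, hwr⟩, rfl⟩
          exact ⟨⟨w, hw, rfl⟩, (hr w).2 hwr⟩
      rw [this]
      exact LinearEquiv.finrank_map_eq f _
  · rintro ⟨hs, hr⟩
    obtain ⟨G, hG, hGU⟩ := exists_piso B hB U W hs hr
    obtain ⟨f, hf, hfG⟩ := witt B hB _ W G rfl hG
    refine ⟨f, hf, ?_⟩
    rw [← hGU]
    ext x
    constructor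
    · rintro ⟨w, hw, rfl⟩
      exact ⟨w, hw, hfG w hw⟩
    · rintro ⟨w, hw, rfl⟩
      exact ⟨w, hw, (hfG w hw).symm⟩
end
end
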